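/- arXiv:1108.2354 — 3 statements merged into one kernel-verified Lean document; each statement's English description precedes it below -/
import Mathlib

section
/- Let T be a tree and let (A_n)_{n≥0} be a decreasing sequence of connected subsets of T (A_{n+1} ⊆ A_n). Then the intersection ⋂_{n≥0} A_n is either connected or empty. -/
open Set Filter Metric Topology TopologicalSpace

/-- An arc: a subset homeomorphic to `[0,1]`. -/
def IsArc {T : Type*} [TopologicalSpace T] (A : Set T) : Prop :=
  Nonempty (↥(Set.Icc (0:ℝ) 1) ≃ₜ ↥A)

/-- An arc with endpoints `x` and `y`. -/
def IsArcBetween {T : Type*} [TopologicalSpace T] (A : Set T) (x y : T) : Prop :=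
  ∃ e : ↥(Set.Icc (0:ℝ) 1) ≃ₜ ↥A,
    ((e ⟨0, by norm_num⟩ : ↥A) : T) = x ∧ ((e ⟨1, by norm_num⟩ : ↥A) : T) = y

/-- A tree: a continuum which is uniquely arcwise connected and is a point or a
union of finitely many arcs. -/
structure IsTreeSpace (T : Type*) [MetricSpace T] : Prop where
  compact : CompactSpace T
  conn : ConnectedSpace T
  uniqueArc : ∀ x y : T, x ≠ y → ∃! A : Set T, IsArcBetween A x y
  finiteArcs : (∃ x : T, (Set.univ : Set T) = {x}) ∨
    ∃ s : Finset (Set T), (∀ A ∈ s, IsArc A) ∧ ⋃₀ (s : Set (Set T)) = Set.univ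

/-- The unique arc from `x` to `y` in a tree. -/
noncomputable def treeArc {T : Type*} [MetricSpace T] (hT : IsTreeSpace T) (x y : T) :
    Set T := by
  classical exact if h : x = y then {x} else (hT.uniqueArc x y h).choose

/-- `Comp B x` : the connected component of `x` in `B` if `x ∈ B`, else `{x}`. -/
noncomputable def Comp {T : Type*} [TopologicalSpace T] (B : Set T) (x : T) : Set T := by
  classical exact if x ∈ B then connectedComponentIn B x else {x}

/-- `x` is an endpoint of the whole space (valence one). -/
def IsEnd {T : Type*} [TopologicalSpace T] (x : T) : Prop :=
  IsConnected ({x}ᶜ : Set T)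

/-- `x` is a cut-point of the whole space (valence at least two). -/
def IsCut {T : Type*} [TopologicalSpace T] (x : T) : Prop :=
  ¬ IsPreconnected ({x}ᶜ : Set T)

/-- `x` is an endpoint of the subspace `S` (valence one in `S`). -/
def IsEndpointOf {T : Type*} [TopologicalSpace T] (S : Set T) (x : T) : Prop :=
  x ∈ S ∧ IsConnected (S \ {x})

/-- A subcontinuum: a nonempty compact connected subset. -/
def IsSubcontinuum {T : Type*} [TopologicalSpace T] (A : Set T) : Prop :=
  A.Nonempty ∧ IsCompact A ∧ IsConnected A

/-- Attracting fixed point. -/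
def IsAFP {T : Type*} [TopologicalSpace T] (f : T → T) (x : T) : Prop :=
  f x = x ∧ ∀ U : Set T, IsOpen U → x ∈ U →
    ∃ V : Set T, IsOpen V ∧ x ∈ V ∧ V ⊆ U ∧ f '' closure V ⊆ V

/-- `A` is asymptotically periodic under `f`: for some `p ≥ 1` the sequence
`f^{pn}(A)` converges in the Hausdorff metric (to a nonempty compact set). -/
def AsympPeriodic {T : Type*} [MetricSpace T] (f : T → T) (A : Set T) : Prop :=
  ∃ p : ℕ, 1 ≤ p ∧ ∃ L : Set T, L.Nonempty ∧ IsCompact L ∧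
    Tendsto (fun n : ℕ => hausdorffDist (f^[p * n] '' A) L) atTop (𝓝 0)

/-- Kuratowski lower limit of a sequence of sets. -/
def KLiminf {T : Type*} [TopologicalSpace T] (A : ℕ → Set T) : Set T :=
  {x | ∀ U : Set T, IsOpen U → x ∈ U → ∀ᶠ n in atTop, (U ∩ A n).Nonempty}

/-- Kuratowski upper limit of a sequence of sets. -/
def KLimsup {T : Type*} [TopologicalSpace T] (A : ℕ → Set T) : Set T :=
  {x | ∀ U : Set T, IsOpen U → x ∈ U → ∃ᶠ n in atTop, (U ∩ A n).Nonempty}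

/-- Convergence in the hyperspace: the Kuratowski lower and upper limits agree. -/
def KConv {T : Type*} [TopologicalSpace T] (A : ℕ → Set T) : Prop :=
  KLiminf A = KLimsup A

/-- Set-theoretic limit superior of the iterated images of `A`. -/
def Ls {T : Type*} (f : T → T) (A : Set T) : Set T :=
  ⋂ m : ℕ, ⋃ n : ℕ, ⋃ (_ : m ≤ n), f^[n] '' A

/-- The hyperspace of subcontinua of `T`, with the Hausdorff metric. -/
abbrev SubCon (T : Type*) [MetricSpace T] :=
  {A : NonemptyCompacts T // IsConnected (A.1 : Set T)}

/-- The induced map on the hyperspace of subcontinua. -/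
noncomputable def indCon {T : Type*} [MetricSpace T] (f : T → T) (hf : Continuous f) :
    SubCon T → SubCon T :=
  fun A => ⟨⟨⟨f '' (A.1 : Set T), A.1.isCompact.image hf⟩, A.1.nonempty.image f⟩,
    A.2.image f hf.continuousOn⟩

/-- Topological entropy (Bowen–Dinaburg) of `f` on the subset `S`. -/
noncomputable def entropyOn {X : Type*} [MetricSpace X] (f : X → X) (S : Set X) : EReal :=
  Dynamics.coverEntropy f S

/-- Topological entropy of `f`. -/
noncomputable def entropy {X : Type*} [MetricSpace X] (f : X → X) : EReal :=
  Dynamics.coverEntropy f Set.univ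

/-- Maximal cardinality of an `(n,f,ε)`-separated subset of `S`. -/
noncomputable def sepNumOn {X : Type*} [MetricSpace X] (f : X → X) (S : Set X)
    (n : ℕ) (ε : ℝ) : ℕ :=
  sSup {k : ℕ | ∃ E : Finset X, ↑E ⊆ S ∧
    (∀ x ∈ E, ∀ y ∈ E, x ≠ y → ∃ j < n, ε < dist (f^[j] x) (f^[j] y)) ∧ E.card = k}

/-- Minimal cardinality of an `(n,f,ε)`-spanning subset of `S`. -/
noncomputable def spanNumOn {X : Type*} [MetricSpace X] (f : X → X) (S : Set X)
    (n : ℕ) (ε : ℝ) : ℕ :=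
  sInf {k : ℕ | ∃ F : Finset X, ↑F ⊆ S ∧
    (∀ x ∈ S, ∃ y ∈ F, ∀ j < n, dist (f^[j] x) (f^[j] y) ≤ ε) ∧ F.card = k}

noncomputable def sepNum {X : Type*} [MetricSpace X] (f : X → X) (n : ℕ) (ε : ℝ) : ℕ :=
  sepNumOn f Set.univ n ε

noncomputable def spanNum {X : Type*} [MetricSpace X] (f : X → X) (n : ℕ) (ε : ℝ) : ℕ :=
  spanNumOn f Set.univ n ε

/-- The graph of a map. -/
def graphOf {X : Type*} (φ : X → X) : Set (X × X) := {p | p.2 = φ p.1}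

/-- The functional envelope: the closure, in the hyperspace of nonempty compact
subsets of `X × X` with the Hausdorff metric, of the set of graphs of continuous
self-maps of `X`. -/
def FunctionalEnvelope (X : Type*) [MetricSpace X] :
    Set (NonemptyCompacts (X × X)) :=
  closure {G : NonemptyCompacts (X × X) | ∃ φ : X → X, Continuous φ ∧
    (G : Set (X × X)) = graphOf φ}

/-- `F` is the map induced by `f` on the functional envelope:
`F(φ) = f ∘ φ`, i.e. on graphs, `F(G) = (id × f)(G)`. -/
def IsEnvelopeMap {X : Type*} [MetricSpace X] (f : X → X)
    (F : ↥(FunctionalEnvelope X) → ↥(FunctionalEnvelope X)) : Prop :=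
  ∀ G : ↥(FunctionalEnvelope X),
    ((F G : NonemptyCompacts (X × X)) : Set (X × X)) =
      Prod.map id f '' ((G : NonemptyCompacts (X × X)) : Set (X × X))

/-- The setoid on `T` identifying all points of `M` (so that `Quotient` is `T/M`). -/
def collapseSetoid {T : Type*} (M : Set T) : Setoid T where
  r a b := a = b ∨ (a ∈ M ∧ b ∈ M)
  iseqv := by
    refine ⟨fun a => Or.inl rfl, ?_, ?_⟩
    · rintro a b (rfl | ⟨h1, h2⟩)
      exacts [Or.inl rfl, Or.inr ⟨h2, h1⟩]
    · rintro a b c (rfl | ⟨h1, h2⟩) h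
      · exact h
      · rcases h with rfl | ⟨h3, h4⟩
        exacts [Or.inr ⟨h1, h2⟩, Or.inr ⟨h1, h4⟩]

/-- `x` and `y` are joined by an injective path (possibly constant) inside `S`. -/
def ArcJoinedIn {T : Type*} [TopologicalSpace T] (S : Set T) (x y : T) : Prop :=
  ∃ (f : ℝ → T) (a b : ℝ), Continuous f ∧ a ≤ b ∧ Set.InjOn f (Set.Icc a b) ∧
    f a = x ∧ f b = y ∧ ∀ t ∈ Set.Icc a b, f t ∈ S

namespace ArcJoinedIn

variable {T : Type*} [TopologicalSpace T] {S : Set T} {x y z : T}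

theorem refl (hx : x ∈ S) : ArcJoinedIn S x x :=
  ⟨fun _ => x, 0, 0, continuous_const, le_rfl, by simp, rfl, rfl, fun _ _ => hx⟩

theorem symm (h : ArcJoinedIn S x y) : ArcJoinedIn S y x := by
  obtain ⟨f, a, b, hf, hab, hinj, hfa, hfb, hS⟩ := h
  refine ⟨fun t => f (-t), -b, -a, by fun_prop, by linarith, ?_, by simpa, by simpa, ?_⟩
  · intro s hs t ht hst
    have := hinj (x₁ := -s) (x₂ := -t) ⟨by linarith [hs.2], by linarith [hs.1]⟩
      ⟨by linarith [ht.2], by linarith [ht.1]⟩ hst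
    linarith
  · intro t ht
    exact hS _ ⟨by linarith [ht.2], by linarith [ht.1]⟩

theorem trans [T2Space T] (hxy : ArcJoinedIn S x y) (hyz : ArcJoinedIn S y z) :
    ArcJoinedIn S x z := by
  obtain ⟨f, a, b, hf, hab, hfinj, hfa, hfb, hfS⟩ := hxy
  obtain ⟨g, c, d, hg, hcd, hginj, hgc, hgd, hgS⟩ := hyz
  have hclosed : IsClosed (g '' Set.Icc c d) := (isCompact_Icc.image hg).isClosed
  have hK : IsCompact (Set.Icc a b ∩ f ⁻¹' (g '' Set.Icc c d)) :=
    isCompact_Icc.inter_right (hclosed.preimage hf)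
  obtain ⟨t, ⟨⟨hta, htb⟩, s, ⟨hsc, hsd⟩, hst⟩, hmin⟩ := hK.exists_isLeast
    ⟨b, ⟨hab, le_rfl⟩, c, ⟨le_rfl, hcd⟩, hgc.trans hfb.symm⟩
  have hdisj : ∀ u ∈ Set.Icc a b, u < t → ∀ v ∈ Set.Icc c d, f u ≠ g v :=
    fun u hu hut v hv huv => hut.not_ge (hmin ⟨hu, v, hv, huv.symm⟩)
  refine ⟨fun u => if u ≤ t then f u else g (u - t + s), a, t + (d - s), ?_, by linarith,
    ?_, ?_, ?_, ?_⟩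
  · refine Continuous.if_le hf (by fun_prop) continuous_id continuous_const ?_
    rintro u rfl
    simpa using hst.symm
  · have key : ∀ u ∈ Set.Icc a t, ∀ v, t < v → v ≤ t + (d - s) → f u ≠ g (v - t + s) := by
      intro u hu v hv hvd huv
      have hvI : v - t + s ∈ Set.Icc c d := ⟨by linarith, by linarith⟩
      rcases hu.2.lt_or_eq with h | rfl
      · exact hdisj u ⟨hu.1, hu.2.trans htb⟩ h _ hvI huv
      · have := hginj ⟨hsc, hsd⟩ hvI (hst.trans huv)
        linarith
    intro u hu v hv huv
    dsimp only at huv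
    split_ifs at huv with h1 h2 h2
    · exact hfinj ⟨hu.1, h1.trans htb⟩ ⟨hv.1, h2.trans htb⟩ huv
    · exact (key u ⟨hu.1, h1⟩ v (not_le.1 h2) hv.2 huv).elim
    · exact (key v ⟨hv.1, h2⟩ u (not_le.1 h1) hu.2 huv.symm).elim
    · have := hginj ⟨by linarith, by linarith [hu.2]⟩ ⟨by linarith, by linarith [hv.2]⟩ huv
      linarith
  · simp [hta, hfa]
  · dsimp only
    split_ifs with h
    · have hsd' : s = d := by linarith
      subst hsd'
      simp [← hst, hgd]
    · rw [← hgd]; congr 1; ring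
  · intro u hu
    dsimp only
    split_ifs with h
    · exact hfS u ⟨hu.1, h.trans htb⟩
    · exact hgS _ ⟨by linarith, by linarith [hu.2]⟩

theorem exists_isArcBetween [T2Space T] (h : ArcJoinedIn S x y) (hxy : x ≠ y) :
    ∃ A ⊆ S, IsArcBetween A x y := by
  obtain ⟨f, a, b, hf, hab, hinj, rfl, rfl, hS⟩ := h
  have hlt : a < b := hab.lt_of_ne fun h => hxy (h ▸ rfl)
  have hmem : ∀ t : Set.Icc (0 : ℝ) 1, a + t * (b - a) ∈ Set.Icc a b := fun t =>
    ⟨by nlinarith [t.2.1], by nlinarith [t.2.2]⟩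
  set φ : Set.Icc (0 : ℝ) 1 → T := fun t => f (a + t * (b - a)) with hφ
  have hφc : Continuous φ := by fun_prop
  have hφi : Function.Injective φ := by
    intro s t hst
    have := hinj (hmem s) (hmem t) hst
    exact Subtype.ext (mul_right_cancel₀ (sub_pos.2 hlt).ne' (add_left_cancel this))
  refine ⟨Set.range φ, ?_, (hφc.isClosedEmbedding hφi).isEmbedding.toHomeomorph, ?_, ?_⟩
  · rintro _ ⟨t, rfl⟩
    exact hS _ (hmem t)
  · simp [hφ]
  · simp [hφ]

end ArcJoinedIn

theorem IsArcBetween.left_mem {T : Type*} [TopologicalSpace T] {A : Set T} {x y : T}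
    (h : IsArcBetween A x y) : x ∈ A := by
  obtain ⟨e, rfl, -⟩ := h
  exact Subtype.coe_prop _

theorem IsArcBetween.right_mem {T : Type*} [TopologicalSpace T] {A : Set T} {x y : T}
    (h : IsArcBetween A x y) : y ∈ A := by
  obtain ⟨e, -, rfl⟩ := h
  exact Subtype.coe_prop _

theorem IsArc.isPreconnected {T : Type*} [TopologicalSpace T] {A : Set T} (h : IsArc A) :
    IsPreconnected A := by
  obtain ⟨e⟩ := h
  have : PreconnectedSpace (Set.Icc (0 : ℝ) 1) :=
    isPreconnected_iff_preconnectedSpace.1 isPreconnected_Icc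
  have := isPreconnected_range (continuous_subtype_val.comp e.continuous)
  rwa [Set.range_comp, e.surjective.range_eq, Set.image_univ, Subtype.range_coe] at this

theorem IsArc.isClosed {T : Type*} [TopologicalSpace T] [T2Space T] {A : Set T}
    (h : IsArc A) : IsClosed A := by
  obtain ⟨e⟩ := h
  exact (isCompact_iff_compactSpace.2 e.compactSpace).isClosed

theorem IsArc.eventually_arcJoinedIn {T : Type*} [TopologicalSpace T] {A U : Set T}
    (hA : IsArc A) (hU : IsOpen U) {p : T} (hpA : p ∈ A) (hpU : p ∈ U) :
    ∀ᶠ q in 𝓝 p, q ∈ A → ArcJoinedIn U p q := by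
  obtain ⟨e⟩ := hA
  set t₀ := e.symm ⟨p, hpA⟩ with ht₀
  have hopen : IsOpen ((fun t => (e t : T)) ⁻¹' U) :=
    hU.preimage (continuous_subtype_val.comp e.continuous)
  obtain ⟨ε, hε, hball⟩ := Metric.isOpen_iff.1 hopen t₀ (by simpa [ht₀] using hpU)
  have hev : ∀ᶠ q : A in 𝓝 ⟨p, hpA⟩, e.symm q ∈ Metric.ball t₀ ε :=
    e.symm.continuous.continuousAt (Metric.ball_mem_nhds _ hε)
  set f : ℝ → T := Set.IccExtend zero_le_one (fun t => (e t : T)) with hf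
  have hfc : Continuous f := (continuous_subtype_val.comp e.continuous).Icc_extend'
  have hfv : ∀ t (ht : t ∈ Set.Icc (0 : ℝ) 1), f t = e ⟨t, ht⟩ := fun t ht =>
    Set.IccExtend_of_mem _ _ ht
  have hfi : Set.InjOn f (Set.Icc 0 1) := by
    intro s hs t ht hst
    rw [hfv s hs, hfv t ht] at hst
    exact congrArg Subtype.val (e.injective (Subtype.ext hst))
  have join : ∀ s t : Set.Icc (0 : ℝ) 1, s ∈ Metric.ball t₀ ε → t ∈ Metric.ball t₀ ε →
      s ≤ t → ArcJoinedIn U (e s : T) (e t : T) := by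
    intro s t hs ht hst
    refine ⟨f, s, t, hfc, hst, hfi.mono (Set.Icc_subset_Icc s.2.1 t.2.2), hfv _ s.2,
      hfv _ t.2, fun u hu => ?_⟩
    have hu' : u ∈ Set.Icc (0 : ℝ) 1 := ⟨s.2.1.trans hu.1, hu.2.trans t.2.2⟩
    rw [hfv u hu']
    refine hball (?_ : (⟨u, hu'⟩ : Set.Icc (0 : ℝ) 1) ∈ Metric.ball t₀ ε)
    rw [Metric.mem_ball, Subtype.dist_eq, Real.dist_eq, abs_lt] at *
    exact ⟨by linarith [hs.1, hu.1], by linarith [ht.2, hu.2]⟩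
  rw [nhds_subtype_eq_comap, Filter.eventually_comap] at hev
  filter_upwards [hev] with q hq hqA
  have hqb := hq ⟨q, hqA⟩ rfl
  rcases le_total t₀ (e.symm ⟨q, hqA⟩) with h | h
  · simpa [ht₀] using join _ _ (Metric.mem_ball_self hε) hqb h
  · simpa [ht₀] using (join _ _ hqb (Metric.mem_ball_self hε) h).symm

theorem eventually_arcJoinedIn_of_sUnion_isArc {T : Type*} [TopologicalSpace T] [T2Space T]
    {s : Finset (Set T)} (hs : ∀ A ∈ s, IsArc A) (hcov : ⋃₀ (s : Set (Set T)) = Set.univ)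
    {U : Set T} (hU : IsOpen U) {p : T} (hp : p ∈ U) :
    ∀ᶠ q in 𝓝 p, ArcJoinedIn U p q := by
  have hall : ∀ᶠ q in 𝓝 p, ∀ A ∈ s, q ∈ A → ArcJoinedIn U p q := by
    rw [Filter.eventually_all_finset]
    intro A hA
    by_cases hpA : p ∈ A
    · exact (hs A hA).eventually_arcJoinedIn hU hpA hp
    · filter_upwards [(hs A hA).isClosed.isOpen_compl.mem_nhds hpA] with q hq hqA
      exact (hq hqA).elim
  filter_upwards [hall] with q hq
  obtain ⟨A, hA, hqA⟩ := Set.mem_sUnion.1 (hcov ▸ Set.mem_univ q)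
  exact hq A hA hqA

/-- Any two points of a preconnected subset of a locally arcwise connected set `S` are joined by
an arc inside `S`. -/
theorem IsPreconnected.arcJoinedIn_of_eventually {T : Type*} [TopologicalSpace T] [T2Space T]
    {B S : Set T} (hB : IsPreconnected B) (hBS : B ⊆ S)
    (hloc : ∀ p ∈ S, ∀ᶠ q in 𝓝 p, ArcJoinedIn S p q) {x y : T} (hx : x ∈ B) (hy : y ∈ B) :
    ArcJoinedIn S x y := by
  by_contra hxy
  have hC : IsOpen {w | w ∈ S ∧ ArcJoinedIn S x w} := by
    rw [isOpen_iff_mem_nhds]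
    rintro w ⟨hw, hxw⟩
    filter_upwards [hloc w hw] with q hq
    obtain ⟨f, a, b, -, hab, -, -, rfl, hS⟩ := id hq
    exact ⟨hS b ⟨hab, le_rfl⟩, hxw.trans hq⟩
  have hD : IsOpen {w | w ∈ S ∧ ¬ ArcJoinedIn S x w} := by
    rw [isOpen_iff_mem_nhds]
    rintro w ⟨hw, hxw⟩
    filter_upwards [hloc w hw] with q hq
    obtain ⟨f, a, b, -, hab, -, -, rfl, hS⟩ := id hq
    exact ⟨hS b ⟨hab, le_rfl⟩, fun h => hxw (h.trans hq.symm)⟩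
  obtain ⟨w, -, ⟨-, h1⟩, -, h2⟩ := hB _ _ hC hD
    (fun w hw => (em (ArcJoinedIn S x w)).imp (⟨hBS hw, ·⟩) (⟨hBS hw, ·⟩))
    ⟨x, hx, hBS hx, .refl (hBS hx)⟩ ⟨y, hy, hBS hy, hxy⟩
  exact h2 h1

/-- Connected subsets of a tree contain the arcs between their points. -/
theorem IsTreeSpace.subset_of_isArcBetween {T : Type*} [MetricSpace T] (hT : IsTreeSpace T)
    {B I : Set T} (hB : IsPreconnected B) {x y : T} (hx : x ∈ B) (hy : y ∈ B) (hxy : x ≠ y)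
    (hI : IsArcBetween I x y) : I ⊆ B := by
  intro z hz
  by_contra hzB
  rcases hT.finiteArcs with ⟨p, hp⟩ | ⟨s, hs, hcov⟩
  · exact hxy ((Set.subsingleton_singleton.anti hp.le) (Set.mem_univ x) (Set.mem_univ y))
  · obtain ⟨A, hA, hAarc⟩ := (hB.arcJoinedIn_of_eventually (S := {z}ᶜ)
      (Set.subset_compl_singleton_iff.2 hzB)
      (fun p hp => eventually_arcJoinedIn_of_sUnion_isArc hs hcov isOpen_compl_singleton hp)
      hx hy).exists_isArcBetween hxy
    exact hA ((hT.uniqueArc x y hxy).unique hI hAarc ▸ hz) rfl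

/-- a decreasing intersection of connected subsets of a tree is
connected or empty. -/
theorem iInter_connected_or_empty {T : Type*} [MetricSpace T]
    (hT : IsTreeSpace T) (A : ℕ → Set T) (hA : ∀ n, IsPreconnected (A n))
    (hdec : ∀ n : ℕ, A (n + 1) ⊆ A n) :
    (⋂ n, A n) = ∅ ∨ IsConnected (⋂ n, A n) := by
  refine (Set.eq_empty_or_nonempty _).imp_right fun hne => ⟨hne, ?_⟩
  refine isPreconnected_of_forall_pair fun x hx y hy => ?_
  rcases eq_or_ne x y with rfl | hxy
  · exact ⟨{x}, Set.singleton_subset_iff.2 hx, rfl, rfl, isPreconnected_singleton⟩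
  · obtain ⟨I, hI, -⟩ := hT.uniqueArc x y hxy
    exact ⟨I, Set.subset_iInter fun n => hT.subset_of_isArcBetween (hA n)
      (Set.mem_iInter.1 hx n) (Set.mem_iInter.1 hy n) hxy hI, hI.left_mem, hI.right_mem,
      IsArc.isPreconnected ⟨hI.choose⟩⟩
end

section
/- Let f : T → T be a continuous map of a tree and let A be a subcontinuum of T containing a periodic point of f. Then A is asymptotically periodic under f, i.e., there exists p ≥ 1 such that the sequence (f^{pn}(A))_{n≥0} converges in the hyperspace of subcontinua of T with the Hausdorff metric. -/
open Set Filter Metric Topology TopologicalSpace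

/-- A preorder along which the map `f` lifts: whatever lies below `f a` is the image of
something below `a`. -/
structure LiftingOrder {T : Type*} (f : T → T) (le : T → T → Prop) : Prop where
  refl : ∀ a, le a a
  trans : ∀ a b c, le a b → le b c → le a c
  lift : ∀ a y, le y (f a) → ∃ a', le a' a ∧ f a' = y

/-- `y` is the `n`-th image of a point below `a`. -/
def Reach {T : Type*} (f : T → T) (le : T → T → Prop) (n : ℕ) (a y : T) : Prop :=
  ∃ a', le a' a ∧ f^[n] a' = y

namespace LiftingOrder

variable {T : Type*} {f : T → T} {le : T → T → Prop}

theorem reach_of_le_iterate (h : LiftingOrder f le) (n : ℕ) {a y : T}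
    (hy : le y (f^[n] a)) : Reach f le n a y := by
  induction n generalizing y with
  | zero => exact ⟨y, hy, rfl⟩
  | succ n ih =>
    rw [Function.iterate_succ_apply'] at hy
    obtain ⟨b, hb, rfl⟩ := h.lift _ _ hy
    obtain ⟨a', ha', rfl⟩ := ih hb
    exact ⟨a', ha', Function.iterate_succ_apply' f n a'⟩

theorem reach_le (h : LiftingOrder f le) {n : ℕ} {a b c : T}
    (hab : Reach f le n a b) (hcb : le c b) : Reach f le n a c := by
  obtain ⟨a', ha', rfl⟩ := hab
  obtain ⟨a'', ha'', rfl⟩ := h.reach_of_le_iterate n hcb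
  exact ⟨a'', h.trans _ _ _ ha'' ha', rfl⟩

theorem le_reach (h : LiftingOrder f le) {n : ℕ} {a b c : T}
    (hab : le a b) (hac : Reach f le n a c) : Reach f le n b c := by
  obtain ⟨a', ha', rfl⟩ := hac
  exact ⟨a', h.trans _ _ _ ha' hab, rfl⟩

theorem reach_trans (h : LiftingOrder f le) {m n : ℕ} {a b c : T}
    (hab : Reach f le m a b) (hbc : Reach f le n b c) : Reach f le (m + n) a c := by
  obtain ⟨b', hb', rfl⟩ := hbc
  obtain ⟨a', ha', rfl⟩ := h.reach_le hab hb'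
  exact ⟨a', ha', by rw [add_comm, Function.iterate_add_apply]⟩

theorem reach_iterate (h : LiftingOrder f le) (n : ℕ) (a : T) : Reach f le n a (f^[n] a) :=
  ⟨a, h.refl a, rfl⟩

theorem reach_self_mul (h : LiftingOrder f le) {q : ℕ} {y : T} (hy : Reach f le q y y) (l : ℕ) :
    Reach f le (q * l) y y := by
  induction l with
  | zero => exact h.reach_iterate 0 y
  | succ l ih => exact h.reach_trans ih hy

theorem mem_image_of_reach {A : Set T} (hA : ∀ z ∈ A, ∀ y, le y z → y ∈ A)
    (h : LiftingOrder f le) {s n : ℕ} {a y : T} (ha : a ∈ f^[s] '' A)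
    (hy : Reach f le n a y) : y ∈ f^[s + n] '' A := by
  obtain ⟨b, hb, rfl⟩ := ha
  obtain ⟨b', hb', rfl⟩ := h.reach_trans (h.reach_iterate s b) hy
  exact ⟨b', hA _ hb _ hb', rfl⟩

theorem mem_image_of_reach_self {A : Set T} (hA : ∀ z ∈ A, ∀ y, le y z → y ∈ A)
    (h : LiftingOrder f le) {s q Q : ℕ} {a : T} (ha : a ∈ f^[s] '' A)
    (hy : Reach f le q a a) (hq : q ∣ Q) (l : ℕ) : a ∈ f^[s + Q * l] '' A := by
  obtain ⟨d, rfl⟩ := hq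
  rw [mul_assoc]
  exact mem_image_of_reach hA h ha (h.reach_self_mul hy _)

theorem reach_of_steps (h : LiftingOrder f le) (v : ℕ → T) (i : ℕ) (n : ℕ)
    (hv : ∀ m, i ≤ m → m < i + n → Reach f le 1 (v m) (v (m + 1))) :
    Reach f le n (v i) (v (i + n)) := by
  induction n with
  | zero => exact h.reach_iterate 0 _
  | succ n ih =>
    exact h.reach_trans (ih fun m h1 h2 => hv m h1 (by omega)) (hv (i + n) (by omega) (by omega))

/-- Along a chain of steps through points which do not return above themselves in few steps,
no later point lies above the initial point. -/
theorem not_le_of_steps (h : LiftingOrder f le) {ι : Type*} [Fintype ι] {c : T → ι} {τ : T → ℝ}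
    (hc : ∀ y y', c y = c y' → τ y ≤ τ y' → le y y') (W : Set T)
    (hW : ∀ y ∈ W, ∀ q, 1 ≤ q → q ≤ Fintype.card ι → ¬ Reach f le q y y) (n : ℕ) :
    ∀ v : ℕ → T, 1 ≤ n → (∀ m ≤ n, v m ∈ W) → (∀ m < n, Reach f le 1 (v m) (v (m + 1))) →
      ¬ le (v 0) (v n) := by
  induction n using Nat.strong_induction_on with
  | _ n ih =>
  intro v hn hvW hv hle
  have short : ∀ i j, i < j → j ≤ n → j - i ≤ Fintype.card ι → ¬ le (v i) (v j) := by
    intro i j hij hjn hk hl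
    have := h.reach_of_steps v i (j - i) fun m h1 h2 => hv m (by omega)
    rw [Nat.add_sub_cancel' hij.le] at this
    exact hW _ (hvW i (by omega)) (j - i) (by omega) hk (h.reach_le this hl)
  by_cases hnk : n ≤ Fintype.card ι
  · exact short 0 n (by omega) le_rfl (by omega) hle
  push Not at hnk
  obtain ⟨i, j, hij, hcij⟩ : ∃ i j : Fin (Fintype.card ι + 1), i < j ∧ c (v i) = c (v j) := by
    obtain ⟨i, j, hij, h'⟩ := Fintype.exists_ne_map_eq_of_card_lt
      (fun i : Fin (Fintype.card ι + 1) => c (v i)) (by simp)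
    rcases lt_or_gt_of_ne hij with hlt | hlt
    exacts [⟨i, j, hlt, h'⟩, ⟨j, i, hlt, h'.symm⟩]
  have hj := j.2
  have hij' : (i : ℕ) < j := hij
  have hji : le (v j) (v i) := by
    rcases le_total (τ (v i)) (τ (v j)) with h1 | h1
    · exact absurd (hc _ _ hcij h1) (short i j hij' (by omega) (by omega))
    · exact hc _ _ hcij.symm h1
  set d := (j : ℕ) - i with hd
  refine ih (n - d) (by omega) (fun m => if m ≤ i then v m else v (m + d)) (by omega) ?_ ?_ ?_
  · intro m hm
    split_ifs
    exacts [hvW m (by omega), hvW _ (by omega)]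
  · intro m hm
    rcases lt_trichotomy m i with h1 | h1 | h1
    · rw [if_pos (by omega), if_pos (by omega)]
      exact hv m (by omega)
    · rw [if_pos (by omega), if_neg (by omega)]
      have e : m + 1 + d = j + 1 := by omega
      rw [e, h1]
      exact h.le_reach hji (hv j (by omega))
    · rw [if_neg (by omega), if_neg (by omega)]
      have e : m + 1 + d = m + d + 1 := by omega
      rw [e]
      exact hv _ (by omega)
  · rw [if_pos (by omega), if_neg (by omega)]
    have e : n - d + d = n := by omega
    rw [e]
    exact hle

/-- A point of a late image of `A` either belongs to all later images in the same residue class,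
or already belongs to an early image in that residue class. -/
theorem persistent_or_early (h : LiftingOrder f le) {ι : Type*} [Fintype ι] {c : T → ι}
    {τ : T → ℝ} (hc : ∀ y y', c y = c y' → τ y ≤ τ y' → le y y') {A : Set T}
    (hA : ∀ z ∈ A, ∀ y, le y z → y ∈ A) {Q : ℕ} (hQ : 0 < Q)
    (hdvd : ∀ q, 1 ≤ q → q ≤ Fintype.card ι → q ∣ Q) (n : ℕ) :
    ∀ z ∈ f^[n] '' A, (∀ l, z ∈ f^[n + Q * l] '' A) ∨
      ∃ s < Q * Fintype.card ι, s ≡ n [MOD Q] ∧ z ∈ f^[s] '' A := by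
  induction n using Nat.strong_induction_on with
  | _ n ih =>
  rintro z ⟨a, ha, rfl⟩
  by_cases hn : n < Q * Fintype.card ι
  · exact Or.inr ⟨n, hn, rfl, a, ha, rfl⟩
  push Not at hn
  by_cases hself : ∃ t ≤ n, ∃ q, 1 ≤ q ∧ q ≤ Fintype.card ι ∧ Reach f le q (f^[t] a) (f^[t] a)
  · left
    intro l
    obtain ⟨t, ht, q, hq1, hq2, hr⟩ := hself
    obtain ⟨b, hb, hb'⟩ := mem_image_of_reach_self hA h (s := t) ⟨a, ha, rfl⟩ hr (hdvd q hq1 hq2) l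
    refine ⟨b, hb, ?_⟩
    have e : n + Q * l = (n - t) + (t + Q * l) := by omega
    rw [e, Function.iterate_add_apply, hb', ← Function.iterate_add_apply]
    congr 2
    omega
  · push Not at hself
    obtain ⟨i, j, hij, hcij⟩ : ∃ i j : Fin (Fintype.card ι + 1), i < j ∧
        c (f^[Q * i] a) = c (f^[Q * j] a) := by
      obtain ⟨i, j, hij, h'⟩ := Fintype.exists_ne_map_eq_of_card_lt
        (fun i : Fin (Fintype.card ι + 1) => c (f^[Q * i] a)) (by simp)
      rcases lt_or_gt_of_ne hij with hlt | hlt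
      exacts [⟨i, j, hlt, h'⟩, ⟨j, i, hlt, h'.symm⟩]
    have hij' : (i : ℕ) < j := hij
    have hjn : Q * j ≤ n := (Nat.mul_le_mul_left Q (Nat.lt_succ_iff.mp j.2)).trans hn
    have hQij : Q * (i : ℕ) < Q * j := Nat.mul_lt_mul_of_pos_left hij' hQ
    have hji : le (f^[Q * j] a) (f^[Q * i] a) := by
      rcases le_total (τ (f^[Q * i] a)) (τ (f^[Q * j] a)) with h1 | h1
      · refine absurd (hc _ _ hcij h1) ?_
        have := h.not_le_of_steps hc {y | ∃ t ≤ n, f^[t] a = y}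
          (by rintro _ ⟨t, ht, rfl⟩; exact hself t ht) (Q * j - Q * i)
          (fun m => f^[Q * i + m] a) (by omega) (fun m hm => ⟨_, by omega, rfl⟩)
          (fun m _ => ⟨_, h.refl _, (Function.iterate_succ_apply' f (Q * i + m) a).symm⟩)
        simpa only [add_zero, Nat.add_sub_cancel' hQij.le] using this
      · exact hc _ _ hcij.symm h1
    obtain ⟨b, hb, hb'⟩ : f^[Q * j] a ∈ f^[Q * i] '' A := by
      obtain ⟨b, hb, hb'⟩ := h.reach_of_le_iterate _ hji
      exact ⟨b, hA _ ha _ hb, hb'⟩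
    have hmem : f^[n] a ∈ f^[n - Q * (j - i)] '' A := by
      refine ⟨b, hb, ?_⟩
      have e : n - Q * (j - i) = (n - Q * j) + Q * i := by rw [Nat.mul_sub]; omega
      rw [e, Function.iterate_add_apply, hb', ← Function.iterate_add_apply]
      congr 2
      omega
    have hle : Q * ((j : ℕ) - i) ≤ n := by rw [Nat.mul_sub]; omega
    have hpos : 0 < Q * ((j : ℕ) - i) := Nat.mul_pos hQ (by omega)
    rcases ih (n - Q * (j - i)) (by omega) _ hmem with h1 | ⟨s, hs, hsn, hz⟩
    · left
      intro l
      have := h1 (l + (j - i))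
      rwa [mul_add, ← add_assoc, add_right_comm, Nat.sub_add_cancel hle] at this
    · refine Or.inr ⟨s, hs, hsn.trans ?_, hz⟩
      exact (Nat.modEq_iff_dvd' (Nat.sub_le _ _)).2 (by rw [Nat.sub_sub_self hle]; exact ⟨_, rfl⟩)

end LiftingOrder

/-- The lower limit of the sequence `m ↦ f^{Qm-i}(A)`. -/
def lowerLimit {T : Type*} [TopologicalSpace T] (f : T → T) (A : Set T) (Q i : ℕ) : Set T :=
  {y | ∀ U ∈ 𝓝 y, ∀ᶠ m : ℕ in atTop, (U ∩ f^[Q * m - i] '' A).Nonempty}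

/-- The upper limit of the sequence `m ↦ f^{Qm-i}(A)`. -/
def upperLimit {T : Type*} [TopologicalSpace T] (f : T → T) (A : Set T) (Q i : ℕ) : Set T :=
  ⋂ N : ℕ, closure (⋃ m ≥ N, f^[Q * m - i] '' A)

section Limits

variable {T : Type*} {f : T → T} {A : Set T} {Q : ℕ}

theorem eventually_mem_of_forall_mem {n i : ℕ} (hn : Q ∣ n + i) {y : T}
    (hy : ∀ l, y ∈ f^[n + Q * l] '' A) : ∀ᶠ m in atTop, y ∈ f^[Q * m - i] '' A := by
  obtain ⟨d, hd⟩ := hn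
  filter_upwards [eventually_ge_atTop d] with m hm
  have := hy (m - d)
  have e : n + Q * (m - d) = Q * m - i := by
    have : Q * d ≤ Q * m := Nat.mul_le_mul_left Q hm
    rw [Nat.mul_sub]; omega
  rwa [e] at this

/-- Union of the first images of `A` in the residue class of `-i` modulo `Q`. -/
def earlyUnion (f : T → T) (A : Set T) (Q K i : ℕ) : Set T :=
  ⋃ s ∈ {s | s < K ∧ Q ∣ s + i}, f^[s] '' A

theorem earlyUnion_congr {K i j : ℕ} (hij : i % Q = j % Q) :
    earlyUnion f A Q K i = earlyUnion f A Q K j := by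
  have : ∀ s, Q ∣ s + i ↔ Q ∣ s + j := fun s =>
    Nat.ModEq.dvd_iff (Nat.ModEq.add_left s hij) dvd_rfl
  simp only [earlyUnion, this]

variable [MetricSpace T]

theorem exists_preimage_upperLimit [CompactSpace T] (hf : Continuous f) (hQ : 0 < Q) {i : ℕ}
    {z : T} (hz : z ∈ upperLimit f A Q i) : ∃ y ∈ upperLimit f A Q (i + 1), f y = z := by
  have anti : Antitone fun N : ℕ => closure (⋃ m ≥ N, f^[Q * m - (i + 1)] '' A) := fun M N hMN =>
    closure_mono (biUnion_subset_biUnion_left fun m (hm : N ≤ m) => hMN.trans hm)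
  have key : (⋂ N : ℕ, (f ⁻¹' {z} ∩ closure (⋃ m ≥ N, f^[Q * m - (i + 1)] '' A))).Nonempty := by
    apply IsCompact.nonempty_iInter_of_directed_nonempty_isCompact_isClosed
    · exact (Antitone.directed_ge fun M N hMN => inter_subset_inter_right _ (anti hMN))
    · intro N
      have hz' : z ∈ closure (⋃ m ≥ N + i + 1, f^[Q * m - i] '' A) := mem_iInter.1 hz _
      have himg : (⋃ m ≥ N + i + 1, f^[Q * m - i] '' A) ⊆
          f '' closure (⋃ m ≥ N, f^[Q * m - (i + 1)] '' A) := by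
        refine iUnion₂_subset fun m (hm : N + i + 1 ≤ m) => ?_
        rintro _ ⟨a, ha, rfl⟩
        refine ⟨f^[Q * m - (i + 1)] a, subset_closure (mem_biUnion (show m ≥ N by omega)
          ⟨a, ha, rfl⟩), ?_⟩
        rw [← Function.iterate_succ_apply' f]
        have : m ≤ Q * m := Nat.le_mul_of_pos_left m hQ
        congr 2
        omega
      obtain ⟨y, hy, rfl⟩ := closure_minimal himg
        ((isClosed_closure.isCompact.image hf).isClosed) hz'
      exact ⟨y, rfl, hy⟩
    · exact fun N => ((isClosed_singleton.preimage hf).inter isClosed_closure).isCompact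
    · exact fun N => (isClosed_singleton.preimage hf).inter isClosed_closure
  obtain ⟨y, hy⟩ := key
  rw [mem_iInter] at hy
  exact ⟨y, mem_iInter.2 fun N => (hy N).2, (hy 0).1⟩

theorem map_mem_lowerLimit (hf : Continuous f) (hQ : 0 < Q) {i : ℕ} {y : T}
    (hy : y ∈ lowerLimit f A Q (i + 1)) : f y ∈ lowerLimit f A Q i := by
  intro U hU
  filter_upwards [hy _ (hf.continuousAt.preimage_mem_nhds hU), eventually_ge_atTop (i + 1)]
    with m hm him
  obtain ⟨_, hU', a, ha, rfl⟩ := hm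
  refine ⟨_, hU', a, ha, ?_⟩
  rw [← Function.iterate_succ_apply' f]
  have : m ≤ Q * m := Nat.le_mul_of_pos_left m hQ
  congr 2
  omega

theorem iterate_mem_lowerLimit (hf : Continuous f) (hQ : 0 < Q) (i : ℕ) {y : T}
    (hy : y ∈ lowerLimit f A Q i) : f^[i] y ∈ lowerLimit f A Q 0 := by
  induction i generalizing y with
  | zero => exact hy
  | succ i ih => exact ih (map_mem_lowerLimit hf hQ hy)

theorem isClosed_earlyUnion (hf : Continuous f) (hA : IsCompact A) (K i : ℕ) :
    IsClosed (earlyUnion f A Q K i) :=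
  ((Set.finite_lt_nat K).subset fun _ h => h.1).isClosed_biUnion
    fun s _ => (hA.image (hf.iterate s)).isClosed

variable {le : T → T → Prop} {ι : Type*} [Fintype ι] {c : T → ι} {τ : T → ℝ}

theorem mem_lowerLimit_or_mem_earlyUnion (h : LiftingOrder f le)
    (hc : ∀ y y', c y = c y' → τ y ≤ τ y' → le y y') (hf : Continuous f) (hAc : IsCompact A)
    (hA : ∀ z ∈ A, ∀ y, le y z → y ∈ A) (hQ : 0 < Q)
    (hdvd : ∀ q, 1 ≤ q → q ≤ Fintype.card ι → q ∣ Q) {i : ℕ} {y : T}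
    (hy : y ∈ upperLimit f A Q i) :
    y ∈ lowerLimit f A Q i ∨ y ∈ earlyUnion f A Q (Q * Fintype.card ι) i := by
  by_contra! hcon
  obtain ⟨h1, h2⟩ := hcon
  simp only [lowerLimit, Set.mem_ofPred_eq, not_forall] at h1
  obtain ⟨U, hU, hUm⟩ := h1
  apply hUm
  have hV := inter_mem hU ((isClosed_earlyUnion (Q := Q) hf hAc _ i).isOpen_compl.mem_nhds h2)
  obtain ⟨v, ⟨hvU, hvE⟩, hv⟩ := mem_closure_iff_nhds.1 (mem_iInter.1 hy i) _ hV
  obtain ⟨m, hm, hvm⟩ := mem_iUnion₂.1 hv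
  have hm' : i ≤ Q * m := (show i ≤ m from hm).trans (Nat.le_mul_of_pos_left m hQ)
  rcases h.persistent_or_early hc hA hQ hdvd _ v hvm with hp | ⟨s, hs, hsn, hvs⟩
  · have he : ∀ᶠ m in atTop, v ∈ f^[Q * m - i] '' A := eventually_mem_of_forall_mem
      (by rw [Nat.sub_add_cancel hm']; exact ⟨m, rfl⟩) hp
    exact he.mono fun m hm => ⟨v, hvU, hm⟩
  · refine absurd (mem_biUnion (show s ∈ {s | s < _ ∧ Q ∣ s + i} from ⟨hs, ?_⟩) hvs) hvE
    refine (Nat.ModEq.dvd_iff (Nat.ModEq.add_right i hsn) dvd_rfl).2 ?_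
    rw [Nat.sub_add_cancel hm']
    exact ⟨m, rfl⟩

theorem upperLimit_subset_lowerLimit [CompactSpace T] (h : LiftingOrder f le) (γ : ι → ℝ → T)
    (hγ : ∀ i, ContinuousOn (γ i) (Icc 0 1))
    (hmono : ∀ i, ∀ s ∈ Icc (0 : ℝ) 1, ∀ t ∈ Icc (0 : ℝ) 1, s ≤ t → le (γ i s) (γ i t))
    (hcover : ∀ y, ∃ i, ∃ t ∈ Icc (0 : ℝ) 1, γ i t = y) (hf : Continuous f) (hAc : IsCompact A)
    (hA : ∀ z ∈ A, ∀ y, le y z → y ∈ A) (hQ : 0 < Q)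
    (hdvd : ∀ q, 1 ≤ q → q ≤ Fintype.card ι → q ∣ Q) :
    upperLimit f A Q 0 ⊆ lowerLimit f A Q 0 := by
  intro z hz
  by_contra hzL
  choose c τ hτ hγτ using hcover
  have hc : ∀ y y', c y = c y' → τ y ≤ τ y' → le y y' := by
    intro y y' hcc ht
    have := hmono (c y) _ (hτ y) _ (hτ y') ht
    rwa [hγτ, hcc, hγτ] at this
  set E : ℕ → Set T := earlyUnion f A Q (Q * Fintype.card ι) with hE
  -- a backward orbit of `z` inside the upper limits
  choose! g hg hfg using fun i (y : T) (hy : y ∈ upperLimit f A Q i) =>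
    exists_preimage_upperLimit hf hQ hy
  let w : ℕ → T := fun n => Nat.rec z (fun i y => g i y) n
  have hwU : ∀ i, w i ∈ upperLimit f A Q i := by
    intro i
    induction i with
    | zero => exact hz
    | succ i ih => exact hg i _ ih
  have hfw : ∀ i, f (w (i + 1)) = w i := fun i => hfg i _ (hwU i)
  have hfw' : ∀ n i, f^[n] (w (i + n)) = w i := by
    intro n
    induction n with
    | zero => intro i; rfl
    | succ n ih => intro i; rw [Function.iterate_succ_apply, ← add_assoc, hfw, ih]
  have hwE : ∀ i, w i ∈ E i := by
    intro i
    refine (mem_lowerLimit_or_mem_earlyUnion h hc hf hAc hA hQ hdvd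
      (hwU i)).resolve_left fun hL => ?_
    refine hzL ?_
    have := iterate_mem_lowerLimit hf hQ i hL
    have e := hfw' i 0
    rw [zero_add] at e
    rwa [e] at this
  have noself : ∀ i, ∀ y ∈ E i, le (w i) y → ∀ q, 1 ≤ q → q ≤ Fintype.card ι →
      ¬ Reach f le q y y := by
    intro i y hy hle q hq1 hq2 hr
    obtain ⟨s, ⟨-, hs⟩, hys⟩ := mem_iUnion₂.1 hy
    refine hzL fun U hU => ?_
    have hz' : ∀ l, z ∈ f^[s + i + Q * l] '' A := by
      intro l
      have h1 := h.mem_image_of_reach_self hA hys hr (hdvd q hq1 hq2) l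
      have e := hfw' i 0
      rw [zero_add] at e
      have := h.mem_image_of_reach hA h1 ⟨w i, hle, e⟩
      rwa [add_right_comm] at this
    exact (eventually_mem_of_forall_mem (i := 0) hs hz').mono fun m hm =>
      ⟨z, mem_of_mem_nhds hU, hm⟩
  have hlt : ∀ i j, i < j → c (w i) = c (w j) → τ (w i) < τ (w j) := by
    intro i j hij hcc
    by_contra! hle
    have := h.not_le_of_steps hc (range w)
      (by rintro _ ⟨i, rfl⟩; exact noself i _ (hwE i) (h.refl _)) (j - i)
      (fun m => w (j - m)) (by omega) (fun m _ => ⟨_, rfl⟩)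
      (fun m hm => ⟨_, h.refl _, by
        have e : j - m = j - (m + 1) + 1 := by omega
        simp only [Function.iterate_one]
        rw [e, hfw]⟩)
    apply this
    simp only [Nat.sub_zero, Nat.sub_sub_self hij.le]
    exact hc _ _ hcc.symm hle
  -- a chain, a gap and a residue which occur infinitely often
  have hpig : ∀ t : ℕ, ∃ i j, t ≤ i ∧ i < j ∧ j - i ≤ Fintype.card ι ∧ c (w i) = c (w j) := by
    intro t
    obtain ⟨i, j, hij, h'⟩ := Fintype.exists_ne_map_eq_of_card_lt
      (fun i : Fin (Fintype.card ι + 1) => c (w (t + i))) (by simp)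
    have := i.2
    have := j.2
    rcases lt_or_gt_of_ne (Fin.val_ne_of_ne hij) with hlt | hlt
    exacts [⟨t + i, t + j, by omega, by omega, by omega, h'⟩,
      ⟨t + j, t + i, by omega, by omega, by omega, h'.symm⟩]
  choose a b hta hab hba hcab using hpig
  obtain ⟨⟨c₀, q, r⟩, hinf⟩ := Finite.exists_infinite_fiber
    (fun t : ℕ => ((c (w (a t)), ⟨b t - a t, Nat.lt_succ_of_le (hba t)⟩,
      ⟨a t % Q, Nat.mod_lt _ hQ⟩) : ι × Fin (Fintype.card ι + 1) × Fin Q))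
  have hfreq : ∀ N, ∃ i, N ≤ i ∧ c (w i) = c₀ ∧ c (w (i + q)) = c₀ ∧ i % Q = r := by
    intro N
    obtain ⟨t, ht, hNt⟩ := (Set.infinite_coe_iff.1 hinf).exists_gt N
    simp only [mem_preimage, mem_singleton_iff, Prod.mk.injEq, Fin.ext_iff] at ht
    obtain ⟨h1, h2, h3⟩ := ht
    have hab' := hab t
    refine ⟨a t, hNt.le.trans (hta t), h1, ?_, h3⟩
    rw [← h2, Nat.add_sub_cancel' hab'.le, ← hcab, h1]
  have hq1 : 1 ≤ (q : ℕ) := by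
    obtain ⟨t, ht⟩ := hinf.nonempty
    simp only [mem_preimage, mem_singleton_iff, Prod.mk.injEq, Fin.ext_iff] at ht
    have := hab t
    omega
  have hq2 : (q : ℕ) ≤ Fintype.card ι := Nat.lt_succ_iff.1 q.2
  choose i hNi hci hciq hir using hfreq
  -- the coordinates on this chain increase to a limit
  set J : Set ℝ := (fun n => τ (w n)) '' {n | c (w n) = c₀} with hJ
  have hJb : BddAbove J := ⟨1, by rintro _ ⟨n, -, rfl⟩; exact (hτ _).2⟩
  have hJne : J.Nonempty := ⟨_, i 0, hci 0, rfl⟩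
  set t₀ := sSup J with ht₀
  have hle₀ : ∀ n, c (w n) = c₀ → τ (w n) ≤ t₀ := fun n hn => le_csSup hJb ⟨n, hn, rfl⟩
  have ht₀I : t₀ ∈ Icc (0 : ℝ) 1 :=
    ⟨(hτ _).1.trans (hle₀ _ (hci 0)), csSup_le hJne (by rintro _ ⟨n, -, rfl⟩; exact (hτ _).2)⟩
  have hconv : ∀ u : ℕ → ℕ, (∀ N, N ≤ u N) → (∀ N, c (w (u N)) = c₀) →
      Tendsto (fun N => w (u N)) atTop (𝓝 (γ c₀ t₀)) := by
    intro u hu huc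
    have h1 : Tendsto (fun N => τ (w (u N))) atTop (𝓝 t₀) := by
      refine tendsto_order.2 ⟨fun x hx => ?_, fun x hx =>
        Eventually.of_forall fun N => (hle₀ _ (huc N)).trans_lt hx⟩
      obtain ⟨_, ⟨n, hn, rfl⟩, hxn⟩ := exists_lt_of_lt_csSup hJne hx
      filter_upwards [eventually_gt_atTop n] with N hN
      exact hxn.trans (hlt n (u N) (hN.trans_le (hu N)) (hn.trans (huc N).symm))
    have h2 := ((hγ c₀) t₀ ht₀I).tendsto.comp
      (tendsto_nhdsWithin_iff.2 ⟨h1, Eventually.of_forall fun N => hτ (w (u N))⟩)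
    refine h2.congr fun N => ?_
    rw [Function.comp_apply, ← huc N, hγτ]
  have hlim := hconv i hNi hci
  have hfix : f^[q] (γ c₀ t₀) = γ c₀ t₀ := by
    have h1 := (((hf.iterate q).tendsto _).comp
      (hconv (fun N => i N + q) (fun N => (hNi N).trans (Nat.le_add_right _ _)) hciq))
    refine tendsto_nhds_unique (h1.congr fun N => ?_) hlim
    exact hfw' q (i N)
  have hmem : γ c₀ t₀ ∈ E (i 0) := by
    refine (isClosed_earlyUnion hf hAc _ _).mem_of_tendsto hlim
      (Eventually.of_forall fun N => ?_)
    have := hwE (i N)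
    rwa [hE, earlyUnion_congr ((hir N).trans (hir 0).symm)] at this
  refine noself (i 0) _ hmem ?_ q hq1 hq2 ⟨_, h.refl _, hfix⟩
  have := hmono c₀ _ (hτ (w (i 0))) _ ht₀I (hle₀ _ (hci 0))
  rwa [← hci 0, hγτ, hci 0] at this

end Limits

/-- If the upper and lower limits of the images of `A` in a compact space agree,
the sequence converges in the Hausdorff metric. -/
theorem tendsto_hausdorffDist_upperLimit {T : Type*} [MetricSpace T] [CompactSpace T]
    {f : T → T} {A : Set T} {Q : ℕ}
    (hsub : upperLimit f A Q 0 ⊆ lowerLimit f A Q 0) :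
    Tendsto (fun n : ℕ => hausdorffDist (f^[Q * n] '' A) (upperLimit f A Q 0)) atTop (𝓝 0) := by
  have hclosed : IsClosed (upperLimit f A Q 0) := isClosed_iInter fun _ => isClosed_closure
  have anti : Antitone fun N : ℕ => closure (⋃ m ≥ N, f^[Q * m - 0] '' A) := fun M N hMN =>
    closure_mono (biUnion_subset_biUnion_left fun m (hm : N ≤ m) => hMN.trans hm)
  have key : ∀ ε > 0, ∀ᶠ n : ℕ in atTop,
      hausdorffDist (f^[Q * n] '' A) (upperLimit f A Q 0) ≤ ε := by
    intro ε hε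
    obtain ⟨N, hN⟩ := exists_subset_nhds_of_isCompact' anti.directed_ge
      (fun N => isClosed_closure.isCompact) (fun N => isClosed_closure)
      (fun x hx => isOpen_thickening.mem_nhds (self_subset_thickening hε (upperLimit f A Q 0) hx))
    obtain ⟨F, hF, hcov⟩ := hclosed.isCompact.elim_nhds_subcover (fun x => ball x (ε / 2))
      fun x _ => ball_mem_nhds x (by positivity)
    have hhit : ∀ᶠ n : ℕ in atTop, ∀ x ∈ F, (ball x (ε / 2) ∩ f^[Q * n] '' A).Nonempty :=
      (Filter.eventually_all_finset F).2 fun x hx =>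
        hsub (hF x hx) _ (ball_mem_nhds x (by positivity))
    filter_upwards [hhit, eventually_ge_atTop N] with n hn hNn
    refine hausdorffDist_le_of_mem_dist hε.le (fun y hy => ?_) fun y hy => ?_
    · obtain ⟨x, hx, hd⟩ := mem_thickening_iff.1
        (hN (subset_closure (mem_biUnion (show n ≥ N from hNn) hy)))
      exact ⟨x, hx, hd.le⟩
    · obtain ⟨x, hx, hyx⟩ := mem_iUnion₂.1 (hcov hy)
      obtain ⟨v, hvx, hv⟩ := hn x hx
      refine ⟨v, hv, ?_⟩
      have h1 := mem_ball.1 hyx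
      have h2 := mem_ball'.1 hvx
      linarith [dist_triangle y x v]
  rw [Metric.tendsto_nhds]
  intro ε hε
  filter_upwards [key (ε / 2) (by positivity)] with n hn
  rw [Real.dist_0_eq_abs, abs_of_nonneg hausdorffDist_nonneg]
  linarith

/-- `S` is an arc from `x` to `y`, parametrized by an interval which may be degenerate. -/
def IsParamArc {T : Type*} [TopologicalSpace T] (x y : T) (S : Set T) : Prop :=
  ∃ ℓ : ℝ, 0 ≤ ℓ ∧ ∃ g : ℝ → T, ContinuousOn g (Icc 0 ℓ) ∧ InjOn g (Icc 0 ℓ) ∧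
    g 0 = x ∧ g ℓ = y ∧ g '' Icc 0 ℓ = S

namespace IsParamArc

variable {T : Type*}

theorem refl [TopologicalSpace T] (x : T) : IsParamArc x x {x} :=
  ⟨0, le_rfl, fun _ => x, continuousOn_const, by simp, rfl, rfl, by simp⟩

theorem left_mem [TopologicalSpace T] {x y : T} {S : Set T} (h : IsParamArc x y S) : x ∈ S := by
  obtain ⟨ℓ, hℓ, g, -, -, rfl, -, rfl⟩ := h
  exact ⟨0, left_mem_Icc.2 hℓ, rfl⟩

theorem right_mem [TopologicalSpace T] {x y : T} {S : Set T} (h : IsParamArc x y S) : y ∈ S := by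
  obtain ⟨ℓ, hℓ, g, -, -, -, rfl, rfl⟩ := h
  exact ⟨ℓ, right_mem_Icc.2 hℓ, rfl⟩

theorem isPreconnected [TopologicalSpace T] {x y : T} {S : Set T} (h : IsParamArc x y S) :
    IsPreconnected S := by
  obtain ⟨ℓ, hℓ, g, hg, -, -, -, rfl⟩ := h
  exact isPreconnected_Icc.image g hg

theorem _root_.IsArcBetween.isParamArc [TopologicalSpace T] {x y : T} {S : Set T}
    (h : IsArcBetween S x y) : IsParamArc x y S := by
  obtain ⟨e, rfl, rfl⟩ := h
  refine ⟨1, zero_le_one, fun t => (e (projIcc 0 1 zero_le_one t) : T), ?_, ?_, ?_, ?_, ?_⟩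
  · exact (continuous_subtype_val.comp (e.continuous.comp continuous_projIcc)).continuousOn
  · intro s hs t ht hst
    have := e.injective (Subtype.ext hst)
    rwa [projIcc_of_mem _ hs, projIcc_of_mem _ ht, Subtype.mk.injEq] at this
  · simp only [projIcc_left]
  · simp only [projIcc_right]
  · ext y
    constructor
    · rintro ⟨t, -, rfl⟩
      exact Subtype.coe_prop _
    · intro hy
      refine ⟨e.symm ⟨y, hy⟩, Subtype.coe_prop _, ?_⟩
      simp only [projIcc_val, Homeomorph.apply_symm_apply]

/-- A parametrized arc with distinct endpoints is an arc in the sense of homeomorphisms. -/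
theorem isArcBetween [TopologicalSpace T] [T2Space T] {x y : T} {S : Set T}
    (h : IsParamArc x y S) (hxy : x ≠ y) : IsArcBetween S x y := by
  obtain ⟨ℓ, hℓ, g, hg, hinj, rfl, rfl, rfl⟩ := h
  have hpos : 0 < ℓ := hℓ.lt_of_ne (by rintro rfl; exact hxy rfl)
  have hmaps : ∀ t ∈ Icc (0 : ℝ) 1, ℓ * t ∈ Icc 0 ℓ := fun t ht =>
    ⟨mul_nonneg hℓ ht.1, mul_le_of_le_one_right hℓ ht.2⟩
  let φ : Icc (0 : ℝ) 1 → (g '' Icc 0 ℓ) := fun t => ⟨g (ℓ * t), _, hmaps t t.2, rfl⟩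
  have hcont : Continuous φ := by
    refine Continuous.subtype_mk ?_ _
    exact hg.comp_continuous (by fun_prop) fun t => hmaps t t.2
  have hbij : Function.Bijective φ := by
    constructor
    · intro s t hst
      have := hinj (hmaps s s.2) (hmaps t t.2) (Subtype.mk.inj hst)
      exact Subtype.ext (mul_left_cancel₀ hpos.ne' this)
    · rintro ⟨_, t, ht, rfl⟩
      refine ⟨⟨t / ℓ, div_nonneg ht.1 hℓ, div_le_one_of_le₀ ht.2 hℓ⟩, Subtype.ext ?_⟩
      simp only [φ, mul_div_cancel₀ _ hpos.ne']
  refine ⟨(hcont.isClosedEmbedding hbij.1).isEmbedding.toHomeomorphOfSurjective hbij.2, ?_, ?_⟩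
  · change g (ℓ * 0) = g 0
    rw [mul_zero]
  · change g (ℓ * 1) = g ℓ
    rw [mul_one]

theorem eq_singleton [TopologicalSpace T] {x : T} {S : Set T} (h : IsParamArc x x S) :
    S = {x} := by
  obtain ⟨ℓ, hℓ, g, -, hinj, h0, h1, rfl⟩ := h
  have : (0 : ℝ) = ℓ := hinj (left_mem_Icc.2 hℓ) (right_mem_Icc.2 hℓ) (h0.trans h1.symm)
  subst this
  simp [h0]

variable [MetricSpace T]

theorem unique (hT : IsTreeSpace T) {x y : T} {S S' : Set T} (h : IsParamArc x y S)
    (h' : IsParamArc x y S') : S = S' := by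
  rcases eq_or_ne x y with rfl | hxy
  · rw [h.eq_singleton, h'.eq_singleton]
  · exact (hT.uniqueArc x y hxy).unique (h.isArcBetween hxy) (h'.isArcBetween hxy)

theorem exists_of_isTreeSpace (hT : IsTreeSpace T) (x y : T) : ∃ S, IsParamArc x y S := by
  rcases eq_or_ne x y with rfl | hxy
  · exact ⟨_, refl x⟩
  · obtain ⟨S, hS, -⟩ := hT.uniqueArc x y hxy
    exact ⟨S, hS.isParamArc⟩

/-- An arc from `x` which meets an arc `β` extends, from its first point on `β`, along `β`. -/
theorem exists_append {x u : T} {S : Set T} (h : IsParamArc x u S) {β : ℝ → T} {a b : ℝ}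
    (hβ : ContinuousOn β (Icc a b)) (hinj : InjOn β (Icc a b)) (hu : u ∈ β '' Icc a b) :
    ∃ t₀ ∈ Icc a b, ∀ t ∈ Icc a b, ∃ S', IsParamArc x (β t) S' ∧ S' ⊆ S ∪ β '' Icc a b ∧
      β '' uIcc t₀ t ⊆ S' := by
  obtain ⟨ℓ, hℓ, g, hg, hginj, rfl, rfl, rfl⟩ := h
  have hcl : IsClosed (β '' Icc a b) := (isCompact_Icc.image_of_continuousOn hβ).isClosed
  have hcomp : IsCompact (Icc 0 ℓ ∩ g ⁻¹' (β '' Icc a b)) :=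
    isCompact_Icc.of_isClosed_subset (hg.preimage_isClosed_of_isClosed isClosed_Icc hcl)
      inter_subset_left
  obtain ⟨s₀, ⟨hs₀, t₀, ht₀, hgs₀⟩, hmin⟩ :=
    hcomp.exists_isLeast ⟨ℓ, right_mem_Icc.2 hℓ, hu⟩
  refine ⟨t₀, ht₀, fun t ht => ?_⟩
  obtain ⟨σ, hσ, hσt⟩ : ∃ σ : ℝ, σ * σ = 1 ∧ σ * (t - t₀) = |t - t₀| := by
    rcases le_total t₀ t with h1 | h1
    · exact ⟨1, by norm_num, by rw [abs_of_nonneg (by linarith)]; ring⟩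
    · exact ⟨-1, by norm_num, by rw [abs_of_nonpos (by linarith)]; ring⟩
  set d := |t - t₀| with hd
  have hd0 : 0 ≤ d := abs_nonneg _
  have hσd : t₀ + σ * d = t := by
    rw [← hσt, ← mul_assoc, hσ]; ring
  -- the segment from `t₀` to `t`
  have hseg : ∀ r, 0 ≤ r → r ≤ d → t₀ + σ * r ∈ Icc a b := by
    intro r hr hrd
    have h1 : σ = 1 ∨ σ = -1 := mul_self_eq_one_iff.1 hσ
    rcases h1 with rfl | rfl <;> constructor <;> linarith [ht.1, ht.2, ht₀.1, ht₀.2]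
  have hseg' : ∀ r ∈ uIcc t₀ t, ∃ r', 0 ≤ r' ∧ r' ≤ d ∧ t₀ + σ * r' = r := by
    intro r hr
    refine ⟨σ * (r - t₀), ?_⟩
    have e : t₀ + σ * (σ * (r - t₀)) = r := by rw [← mul_assoc, hσ]; ring
    have h1 : σ = 1 ∨ σ = -1 := mul_self_eq_one_iff.1 hσ
    rcases h1 with rfl | rfl
    · have : t₀ ≤ t := by linarith
      rw [uIcc_of_le this] at hr
      exact ⟨by linarith [hr.1], by linarith [hr.2], e⟩
    · have : t ≤ t₀ := by linarith
      rw [uIcc_of_ge this] at hr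
      exact ⟨by linarith [hr.2], by linarith [hr.1], e⟩
  let G : ℝ → T := fun r => if r ≤ s₀ then g r else β (t₀ + σ * (r - s₀))
  have hG1 : ∀ r, r ≤ s₀ → G r = g r := fun r hr => if_pos hr
  have hG2 : ∀ r, s₀ ≤ r → G r = β (t₀ + σ * (r - s₀)) := by
    intro r hr
    rcases hr.eq_or_lt with rfl | hr
    · rw [hG1 _ le_rfl, ← hgs₀, sub_self, mul_zero, add_zero]
    · exact if_neg (not_le.2 hr)
  have hI : Icc 0 (s₀ + d) = Icc 0 s₀ ∪ Icc s₀ (s₀ + d) :=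
    (Icc_union_Icc_eq_Icc hs₀.1 (by linarith)).symm
  have hcross : ∀ r ∈ Icc 0 s₀, ∀ r', s₀ < r' → r' ≤ s₀ + d → G r ≠ G r' := by
    intro r hr r' h1 h2 he
    rw [hG1 r hr.2, hG2 r' h1.le] at he
    have h3 := hseg (r' - s₀) (by linarith) (by linarith)
    have h4 : s₀ ≤ r := hmin ⟨⟨hr.1, hr.2.trans hs₀.2⟩, _, h3, he.symm⟩
    have h5 : r = s₀ := le_antisymm hr.2 h4
    rw [h5, ← hgs₀] at he
    have h6 := hinj ht₀ h3 he
    have h7 : σ * (r' - s₀) = 0 := by linarith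
    have h8 : σ ≠ 0 := by rintro rfl; norm_num at hσ
    have := (mul_eq_zero.1 h7).resolve_left h8
    linarith
  refine ⟨G '' Icc 0 (s₀ + d), ⟨s₀ + d, by linarith [hs₀.1], G, ?_, ?_, ?_, ?_, rfl⟩, ?_, ?_⟩
  · rw [hI]
    refine ContinuousOn.union_of_isClosed ?_ ?_ isClosed_Icc isClosed_Icc
    · exact (hg.mono (Icc_subset_Icc_right hs₀.2)).congr fun r hr => hG1 r hr.2
    · refine ContinuousOn.congr ?_ fun r hr => hG2 r hr.1
      refine hβ.comp (by fun_prop) fun r hr => hseg _ ?_ ?_ <;> linarith [hr.1, hr.2]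
  · intro r hr r' hr' he
    rcases le_or_gt r s₀ with h1 | h1 <;> rcases le_or_gt r' s₀ with h2 | h2
    · rw [hG1 r h1, hG1 r' h2] at he
      exact hginj ⟨hr.1, h1.trans hs₀.2⟩ ⟨hr'.1, h2.trans hs₀.2⟩ he
    · exact absurd he (hcross r ⟨hr.1, h1⟩ r' h2 hr'.2)
    · exact absurd he.symm (hcross r' ⟨hr'.1, h2⟩ r h1 hr.2)
    · rw [hG2 r h1.le, hG2 r' h2.le] at he
      have := hinj (hseg _ (by linarith) (by linarith [hr.2]))
        (hseg _ (by linarith) (by linarith [hr'.2])) he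
      have h8 : σ ≠ 0 := by rintro rfl; norm_num at hσ
      have := mul_left_cancel₀ h8 (add_left_cancel this)
      linarith
  · exact hG1 0 hs₀.1
  · rw [hG2 _ (by linarith), add_sub_cancel_left, hσd]
  · rintro _ ⟨r, hr, rfl⟩
    rcases le_total r s₀ with h1 | h1
    · exact Or.inl ⟨r, ⟨hr.1, h1.trans hs₀.2⟩, (hG1 r h1).symm⟩
    · exact Or.inr ⟨_, hseg _ (by linarith) (by linarith [hr.2]), (hG2 r h1).symm⟩
  · rintro _ ⟨r, hr, rfl⟩
    obtain ⟨r', h1, h2, rfl⟩ := hseg' r hr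
    exact ⟨s₀ + r', ⟨by linarith [hs₀.1], by linarith⟩, by
      rw [hG2 _ (by linarith), add_sub_cancel_left]⟩

end IsParamArc

/-- The arcs covering a tree, parametrized by the unit interval. -/
theorem IsTreeSpace.exists_arcs {T : Type*} [MetricSpace T] (hT : IsTreeSpace T)
    (hne : ¬ ∃ x : T, (univ : Set T) = {x}) :
    ∃ (s : Finset (Set T)) (β : s → ℝ → T), (∀ i, ContinuousOn (β i) (Icc 0 1)) ∧
      (∀ i, InjOn (β i) (Icc 0 1)) ∧ ∀ y, ∃ i, y ∈ β i '' Icc 0 1 := by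
  obtain ⟨s, hs, hcov⟩ := hT.finiteArcs.resolve_left hne
  have key : ∀ A : s, ∃ β : ℝ → T, ContinuousOn β (Icc 0 1) ∧ InjOn β (Icc 0 1) ∧
      β '' Icc 0 1 = A := by
    rintro ⟨A, hA⟩
    obtain ⟨e⟩ := hs A hA
    refine ⟨fun t => (e (projIcc 0 1 zero_le_one t) : T), ?_, ?_, ?_⟩
    · exact (continuous_subtype_val.comp (e.continuous.comp continuous_projIcc)).continuousOn
    · intro s hs t ht hst
      have := e.injective (Subtype.ext hst)
      rwa [projIcc_of_mem _ hs, projIcc_of_mem _ ht, Subtype.mk.injEq] at this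
    · ext y
      constructor
      · rintro ⟨t, -, rfl⟩
        exact Subtype.coe_prop _
      · intro hy
        refine ⟨e.symm ⟨y, hy⟩, Subtype.coe_prop _, ?_⟩
        simp only [projIcc_val, Homeomorph.apply_symm_apply]
  choose β hβ hinj himg using key
  refine ⟨s, β, hβ, hinj, fun y => ?_⟩
  obtain ⟨A, hA, hy⟩ := hcov.symm ▸ mem_univ y
  exact ⟨⟨A, hA⟩, (himg ⟨A, hA⟩).symm ▸ hy⟩

/-- In a tree, a connected set contains the arc between any two of its points. -/
theorem IsParamArc.subset_of_isPreconnected {T : Type*} [MetricSpace T] (hT : IsTreeSpace T)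
    {x z : T} {S B : Set T} (hS : IsParamArc x z S) (hB : IsPreconnected B) (hx : x ∈ B)
    (hz : z ∈ B) : S ⊆ B := by
  by_cases hne : ∃ x : T, (univ : Set T) = {x}
  · obtain ⟨o, ho⟩ := hne
    intro y _
    have h1 : y ∈ ({o} : Set T) := ho ▸ mem_univ y
    have h2 : x ∈ ({o} : Set T) := ho ▸ mem_univ x
    rwa [mem_singleton_iff.1 h1, ← mem_singleton_iff.1 h2]
  obtain ⟨s, β, hβ, hinj, hcov⟩ := hT.exists_arcs hne
  intro p hpS
  by_contra hpB
  let R : T → Prop := fun y => ∃ S, IsParamArc x y S ∧ p ∉ S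
  -- reachability avoiding `p` is locally constant away from `p`
  have hloc : ∀ y, y ≠ p → ∀ᶠ y' in 𝓝 y, (R y ↔ R y') := by
    intro y hyp
    have harc : ∀ i, ∀ᶠ y' in 𝓝 y, y' ∈ β i '' Icc 0 1 → (R y ↔ R y') := by
      intro i
      by_cases hy : y ∈ β i '' Icc 0 1
      · obtain ⟨t, ht, rfl⟩ := hy
        have hev : ∀ᶠ r in 𝓝[Icc 0 1] t, β i r ≠ p := (hβ i t ht).eventually_ne hyp
        obtain ⟨δ, hδ, hδ'⟩ := Metric.mem_nhdsWithin_iff.1 hev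
        have hcl : IsClosed (β i '' (Icc 0 1 ∩ {r | δ ≤ dist r t})) := by
          refine IsCompact.isClosed (IsCompact.image_of_continuousOn ?_
            ((hβ i).mono inter_subset_left))
          exact isCompact_Icc.inter_right (isClosed_le continuous_const (by fun_prop))
        have hnot : β i t ∉ β i '' (Icc 0 1 ∩ {r | δ ≤ dist r t}) := by
          rintro ⟨r, ⟨hr, hrt⟩, he⟩
          rw [hinj i hr ht he, Set.mem_ofPred_eq, dist_self] at hrt
          linarith
        filter_upwards [hcl.isOpen_compl.mem_nhds hnot]
        rintro _ hn ⟨t', ht', rfl⟩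
        have hd : dist t' t < δ := by
          by_contra! hge
          exact hn ⟨t', ⟨ht', hge⟩, rfl⟩
        have hsub : uIcc t t' ⊆ Icc 0 1 := uIcc_subset_Icc ht ht'
        have hp : p ∉ β i '' uIcc t t' := by
          rintro ⟨r, hr, he⟩
          refine hδ' ⟨?_, hsub hr⟩ he
          rw [mem_ball, dist_comm]
          rw [dist_comm] at hd
          exact (Real.dist_left_le_of_mem_uIcc hr).trans_lt hd
        have move : ∀ u ∈ uIcc t t', ∀ v ∈ uIcc t t', R (β i u) → R (β i v) := by
          rintro u hu v hv ⟨S₁, hS₁, hpS₁⟩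
          obtain ⟨_, -, h2⟩ := hS₁.exists_append ((hβ i).mono hsub) ((hinj i).mono hsub)
            ⟨u, hu, rfl⟩
          obtain ⟨S', hS', hsub', -⟩ := h2 v hv
          exact ⟨S', hS', fun h => (hsub' h).elim hpS₁ hp⟩
        exact ⟨move t left_mem_uIcc t' right_mem_uIcc, move t' right_mem_uIcc t left_mem_uIcc⟩
      · filter_upwards [(isCompact_Icc.image_of_continuousOn (hβ i)).isClosed.isOpen_compl.mem_nhds
          hy] with y' h1 h2
        exact absurd h2 h1
    filter_upwards [Filter.eventually_all.2 harc] with y' hy'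
    obtain ⟨i, hi⟩ := hcov y'
    exact hy' i hi
  have hopen : ∀ P : Prop, IsOpen {y | y ≠ p ∧ (R y ↔ P)} := by
    intro P
    rw [isOpen_iff_mem_nhds]
    rintro y ⟨hy, hP⟩
    filter_upwards [hloc y hy, isOpen_ne.mem_nhds hy] with y' h1 h2
    exact ⟨h2, h1.symm.trans hP⟩
  have hxp : x ≠ p := fun h => hpB (h ▸ hx)
  have hRx : R x := ⟨_, IsParamArc.refl x, hxp.symm⟩
  have hRz : ¬ R z := by
    rintro ⟨S', hS', hp⟩
    exact hp (hS.unique hT hS' ▸ hpS)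
  obtain ⟨y, -, h1, h2⟩ := hB _ _ (hopen True) (hopen False)
    (fun y hy => by
      have hyp : y ≠ p := fun h => hpB (h ▸ hy)
      by_cases hR : R y
      · exact Or.inl ⟨hyp, iff_true_intro hR⟩
      · exact Or.inr ⟨hyp, iff_false_intro hR⟩)
    ⟨x, hx, hxp, iff_true_intro hRx⟩
    ⟨z, hz, fun h => hpB (h ▸ hz), iff_false_intro hRz⟩
  exact h2.2.1 (h1.2.2 trivial)

/-- A tree is covered by finitely many paths which are monotone for the order rooted at `x`. -/
theorem IsTreeSpace.exists_chains.{u} {T : Type u} [MetricSpace T] (hT : IsTreeSpace T) (x : T)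
    (K : T → Set T) (hK : ∀ z, IsParamArc x z (K z)) :
    ∃ (ι : Type u) (_ : Fintype ι) (γ : ι → ℝ → T), (∀ i, ContinuousOn (γ i) (Icc 0 1)) ∧
      (∀ i, ∀ s ∈ Icc (0 : ℝ) 1, ∀ t ∈ Icc (0 : ℝ) 1, s ≤ t → γ i s ∈ K (γ i t)) ∧
      ∀ y, ∃ i, ∃ t ∈ Icc (0 : ℝ) 1, γ i t = y := by
  by_cases hne : ∃ x : T, (univ : Set T) = {x}
  · obtain ⟨o, ho⟩ := hne
    refine ⟨PUnit, inferInstance, fun _ _ => o, fun _ => continuousOn_const,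
      fun _ _ _ _ _ _ => (hK o).right_mem, fun y => ⟨⟨⟩, 0, by simp, ?_⟩⟩
    exact (mem_singleton_iff.1 (ho ▸ mem_univ y)).symm
  obtain ⟨s, β, hβ, hinj, hcov⟩ := hT.exists_arcs hne
  have hroot : ∀ i, ∃ t₀ ∈ Icc (0 : ℝ) 1, ∀ t ∈ Icc (0 : ℝ) 1, β i '' uIcc t₀ t ⊆ K (β i t) := by
    intro i
    obtain ⟨t₀, ht₀, h⟩ := (hK (β i 0)).exists_append (hβ i) (hinj i) ⟨0, by simp, rfl⟩
    refine ⟨t₀, ht₀, fun t ht => ?_⟩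
    obtain ⟨S', hS', -, hsub⟩ := h t ht
    rwa [(hK _).unique hT hS']
  choose t₀ ht₀ hsub using hroot
  -- each arc is cut at its point nearest to `x`
  let e : s × Bool → ℝ := fun i => if i.2 then 1 else 0
  have he : ∀ i, e i ∈ Icc (0 : ℝ) 1 := by
    rintro ⟨i, _ | _⟩ <;> simp [e]
  have hmem : ∀ i : s × Bool, ∀ r ∈ Icc (0 : ℝ) 1, t₀ i.1 + r * (e i - t₀ i.1) ∈ Icc (0 : ℝ) 1 := by
    intro i r hr
    have := (convex_Icc (0 : ℝ) 1).add_smul_sub_mem (ht₀ i.1) (he i) hr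
    simpa using this
  refine ⟨s × Bool, inferInstance, fun i r => β i.1 (t₀ i.1 + r * (e i - t₀ i.1)), ?_, ?_, ?_⟩
  · intro i
    exact (hβ i.1).comp (by fun_prop) fun r hr => hmem i r hr
  · intro i r hr r' hr' hrr
    refine hsub i.1 _ (hmem i r' hr') ⟨_, ?_, rfl⟩
    rcases le_total 0 (e i - t₀ i.1) with h1 | h1
    · rw [uIcc_of_le (by nlinarith [hr'.1])]
      exact ⟨by nlinarith [hr.1], by nlinarith⟩
    · rw [uIcc_of_ge (by nlinarith [hr'.1])]
      exact ⟨by nlinarith, by nlinarith [hr.1]⟩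
  · intro y
    obtain ⟨i, t, ht, rfl⟩ := hcov y
    have h0 := ht₀ i
    rcases le_total (t₀ i) t with h1 | h1
    · rcases h1.eq_or_lt with h2 | h2
      · exact ⟨(i, true), 0, by simp, by simp [h2]⟩
      have h3 : 0 < 1 - t₀ i := by linarith [ht.2]
      refine ⟨(i, true), (t - t₀ i) / (1 - t₀ i), ⟨by apply div_nonneg <;> linarith,
        (div_le_one h3).2 (by linarith [ht.2])⟩, ?_⟩
      simp only [e, if_true]
      rw [div_mul_cancel₀ _ h3.ne', add_sub_cancel]
    · rcases h1.eq_or_lt with h2 | h2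
      · exact ⟨(i, true), 0, by simp, by simp [h2]⟩
      have h3 : 0 < t₀ i := by linarith [ht.1]
      refine ⟨(i, false), (t₀ i - t) / t₀ i, ⟨by apply div_nonneg <;> linarith,
        (div_le_one h3).2 (by linarith [ht.1])⟩, ?_⟩
      simp only [e, Bool.false_eq_true, if_false, zero_sub, mul_neg]
      rw [div_mul_cancel₀ _ h3.ne']
      congr 1
      ring

/-- a subcontinuum containing a periodic point is asymptotically
periodic. -/
theorem asympPeriodic_of_periodic_point {T : Type*} [MetricSpace T]
    (hT : IsTreeSpace T) (f : T → T) (hf : Continuous f)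
    (A : Set T) (hA : IsSubcontinuum A)
    (hper : ∃ x ∈ A, ∃ p : ℕ, 1 ≤ p ∧ f^[p] x = x) :
    AsympPeriodic f A := by
  have := hT.compact
  obtain ⟨x, hxA, p, hp, hpx⟩ := hper
  set g := f^[p] with hg
  have hgc : Continuous g := hf.iterate p
  choose K hK using IsParamArc.exists_of_isTreeSpace hT x
  have hdown : ∀ B : Set T, IsPreconnected B → x ∈ B → ∀ z ∈ B, K z ⊆ B := fun B hB hx z hz =>
    (hK z).subset_of_isPreconnected hT hB hx hz
  obtain ⟨ι, _, γ, hγ, hmono, hcover⟩ := hT.exists_chains x K hK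
  have horder : LiftingOrder g fun y z => y ∈ K z := by
    refine ⟨fun z => (hK z).right_mem, fun a b c hab hbc => ?_, fun a y hy => ?_⟩
    · exact hdown _ (hK c).isPreconnected (hK c).left_mem b hbc hab
    · exact hdown (g '' K a) ((hK a).isPreconnected.image g hgc.continuousOn)
        ⟨x, (hK a).left_mem, hpx⟩ _ ⟨a, (hK a).right_mem, rfl⟩ hy
  have hQ := Nat.factorial_pos (Fintype.card ι)
  have hsub := upperLimit_subset_lowerLimit horder γ hγ hmono hcover hgc hA.2.1
    (fun z hz y hy => hdown A hA.2.2.isPreconnected hxA z hz hy) hQ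
    fun q h1 h2 => Nat.dvd_factorial h1 h2
  refine ⟨p * (Fintype.card ι).factorial, Nat.mul_pos hp hQ,
    upperLimit g A (Fintype.card ι).factorial 0, ⟨x, ?_⟩, ?_, ?_⟩
  · exact mem_iInter.2 fun N => subset_closure
      (mem_biUnion (show N ≥ N from le_rfl) ⟨x, hxA, Function.iterate_fixed hpx _⟩)
  · exact (isClosed_iInter fun _ => isClosed_closure).isCompact
  · exact (tendsto_hausdorffDist_upperLimit hsub).congr fun n => by
      rw [hg, ← Function.iterate_mul, mul_assoc]
end

section
/- Let f : T → T be a continuous map of a tree such that no cut-point of T is periodic, and let s be the unique attracting fixed point of f. Then for every x ∈ T, either f^n(x) is a periodic point for some n ≥ 0, or the orbit f^n(x) converges to s as n → ∞. -/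
open Set Filter Metric Topology TopologicalSpace

/-- `γ` restricted to `[u, v]` is an injective path from `a` to `b` (a single point if `u = v`). -/
structure IsArcPath {T : Type*} [TopologicalSpace T] (γ : ℝ → T) (u v : ℝ) (a b : T) : Prop where
  le : u ≤ v
  cont : ContinuousOn γ (Icc u v)
  inj : InjOn γ (Icc u v)
  source : γ u = a
  target : γ v = b

/-- `a` and `b` are the ends of a possibly degenerate arc contained in `S`. -/
def ArcJoined {T : Type*} [TopologicalSpace T] (S : Set T) (a b : T) : Prop :=
  ∃ (γ : ℝ → T) (u v : ℝ), IsArcPath γ u v a b ∧ MapsTo γ (Icc u v) S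

/-- The order of a tree rooted at `s`: `c` lies on every arc from `s` to `z`. -/
def RootLE {T : Type*} [TopologicalSpace T] (s c z : T) : Prop :=
  ¬ ArcJoined ({c}ᶜ : Set T) s z

section ArcPaths

variable {T : Type*} [TopologicalSpace T] {γ δ : ℝ → T} {u v t t' : ℝ} {a b c : T} {S : Set T}

theorem IsArcPath.sub (h : IsArcPath γ u v a b) (ht : t ∈ Icc u v) (ht' : t' ∈ Icc u v)
    (htt : t ≤ t') : IsArcPath γ t t' (γ t) (γ t') :=
  ⟨htt, h.cont.mono (Icc_subset_Icc ht.1 ht'.2), h.inj.mono (Icc_subset_Icc ht.1 ht'.2), rfl, rfl⟩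

theorem IsArcPath.reverse (h : IsArcPath γ u v a b) :
    IsArcPath (fun t => γ (-t)) (-v) (-u) b a := by
  have hm : MapsTo (fun t : ℝ => -t) (Icc (-v) (-u)) (Icc u v) := by
    intro t ht
    exact ⟨by linarith [ht.2], by linarith [ht.1]⟩
  refine ⟨by linarith [h.le], h.cont.comp continuous_neg.continuousOn hm, ?_, ?_, ?_⟩
  · exact h.inj.comp neg_injective.injOn hm
  · simpa using h.target
  · simpa using h.source

theorem ArcJoined.symm (h : ArcJoined S a b) : ArcJoined S b a := by
  obtain ⟨γ, u, v, h, hS⟩ := h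
  refine ⟨_, _, _, h.reverse, ?_⟩
  intro t ht
  exact hS ⟨by linarith [ht.2], by linarith [ht.1]⟩

theorem ArcJoined.left_mem (h : ArcJoined S a b) : a ∈ S := by
  obtain ⟨γ, u, v, h, hS⟩ := h
  exact h.source ▸ hS (left_mem_Icc.2 h.le)

theorem ArcJoined.right_mem (h : ArcJoined S a b) : b ∈ S := h.symm.left_mem

theorem ArcJoined.trans [T2Space T] (h₁ : ArcJoined S a b) (h₂ : ArcJoined S b c) :
    ArcJoined S a c := by
  obtain ⟨γ, u, v, hγ, hγS⟩ := h₁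
  obtain ⟨δ, u', v', hδ, hδS⟩ := h₂
  have hB : IsClosed (δ '' Icc u' v') := (isCompact_Icc.image_of_continuousOn hδ.cont).isClosed
  have hK : IsClosed (Icc u v ∩ γ ⁻¹' (δ '' Icc u' v')) :=
    hγ.cont.preimage_isClosed_of_isClosed isClosed_Icc hB
  have hKc : IsCompact (Icc u v ∩ γ ⁻¹' (δ '' Icc u' v')) :=
    isCompact_Icc.of_isClosed_subset hK inter_subset_left
  -- the first time at which `γ` meets the second arc
  obtain ⟨t₀, ⟨ht₀, u₀, hu₀, hγδ⟩, hmin⟩ := hKc.exists_isLeast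
    ⟨v, right_mem_Icc.2 hγ.le, u', left_mem_Icc.2 hδ.le, hδ.source.trans hγ.target.symm⟩
  have hshift : MapsTo (fun t => t - t₀ + u₀) (Icc t₀ (t₀ + (v' - u₀))) (Icc u' v') := by
    intro t ht
    exact ⟨by linarith [ht.1, hu₀.1], by linarith [ht.2]⟩
  have hsub : Icc u t₀ ⊆ Icc u v := Icc_subset_Icc le_rfl ht₀.2
  let η : ℝ → T := fun t => if t ≤ t₀ then γ t else δ (t - t₀ + u₀)
  have hη₁ : EqOn η γ (Icc u t₀) := fun t ht => if_pos ht.2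
  have hη₂ : EqOn η (fun t => δ (t - t₀ + u₀)) (Icc t₀ (t₀ + (v' - u₀))) := by
    intro t ht
    rcases ht.1.eq_or_lt with rfl | hlt
    · simp [η, hγδ]
    · exact if_neg hlt.not_ge
  have hsplit : Icc u (t₀ + (v' - u₀)) = Icc u t₀ ∪ Icc t₀ (t₀ + (v' - u₀)) :=
    (Icc_union_Icc_eq_Icc ht₀.1 (by linarith [hu₀.2])).symm
  have hcross : ∀ t ∈ Icc u t₀, ∀ t' ∈ Icc t₀ (t₀ + (v' - u₀)), η t = η t' → t = t' := by
    intro t ht t' ht' h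
    rw [hη₁ ht, hη₂ ht'] at h
    have h1 : t₀ ≤ t := hmin ⟨hsub ht, _, hshift ht', h.symm⟩
    have h2 : t = t₀ := le_antisymm ht.2 h1
    subst h2
    have := hδ.inj hu₀ (hshift ht') (hγδ.trans h)
    simp only at this
    linarith
  refine ⟨η, u, t₀ + (v' - u₀), ⟨by linarith [ht₀.1, hu₀.2], ?_, ?_, ?_, ?_⟩, ?_⟩
  · rw [hsplit]
    refine ContinuousOn.union_of_isClosed ?_ ?_ isClosed_Icc isClosed_Icc
    · exact (hγ.cont.mono hsub).congr hη₁
    · exact (hδ.cont.comp (by fun_prop) hshift).congr hη₂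
  · rw [hsplit]
    rintro t (ht | ht) t' (ht' | ht') h
    · rw [hη₁ ht, hη₁ ht'] at h
      exact hγ.inj (hsub ht) (hsub ht') h
    · exact hcross t ht t' ht' h
    · exact (hcross t' ht' t ht h.symm).symm
    · rw [hη₂ ht, hη₂ ht'] at h
      have := hδ.inj (hshift ht) (hshift ht') h
      simp only at this
      linarith
  · rw [hη₁ (left_mem_Icc.2 ht₀.1), hγ.source]
  · rw [hη₂ (right_mem_Icc.2 (by linarith [hu₀.2])), ← hδ.target]
    simp
  · rw [hsplit]
    rintro t (ht | ht)
    · rw [hη₁ ht]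
      exact hγS (hsub ht)
    · rw [hη₂ ht]
      exact hδS (hshift ht)

theorem IsArcPath.isArcBetween [T2Space T] (h : IsArcPath γ u v a b) (huv : u < v) :
    IsArcBetween (γ '' Icc u v) a b := by
  have hm : ∀ t : ↥(Icc (0:ℝ) 1), u + t * (v - u) ∈ Icc u v := by
    rintro ⟨t, h0, h1⟩
    constructor <;> simp only <;> nlinarith
  let φ : ↥(Icc (0:ℝ) 1) → T := fun t => γ (u + t * (v - u))
  have hφ : Continuous φ := h.cont.comp_continuous (by fun_prop) hm
  have hφi : Function.Injective φ := by
    intro t t' htt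
    have h1 := h.inj (hm t) (hm t') htt
    have h2 : (t : ℝ) * (v - u) = t' * (v - u) := by linarith
    exact Subtype.ext (mul_right_cancel₀ (by linarith) h2)
  have himg : range φ = γ '' Icc u v := by
    apply Subset.antisymm
    · rintro _ ⟨t, rfl⟩
      exact ⟨_, hm t, rfl⟩
    · rintro _ ⟨t, ht, rfl⟩
      have hpos : 0 < v - u := by linarith
      refine ⟨⟨(t - u) / (v - u), div_nonneg (by linarith [ht.1]) hpos.le,
        (div_le_one hpos).2 (by linarith [ht.2])⟩, ?_⟩
      simp only [φ]
      rw [div_mul_cancel₀ _ hpos.ne']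
      congr 1
      ring
  rw [← himg]
  refine ⟨(hφ.isClosedEmbedding hφi).isEmbedding.toHomeomorph, ?_, ?_⟩
  · simpa [φ] using h.source
  · simpa [φ] using h.target

theorem IsArc.exists_isArcPath {A : Set T} (hA : IsArc A) :
    ∃ (γ : ℝ → T) (a b : T), IsArcPath γ 0 1 a b ∧ γ '' Icc 0 1 = A := by
  obtain ⟨e⟩ := hA
  refine ⟨fun t => (e (projIcc 0 1 zero_le_one t) : T), _, _,
    ⟨zero_le_one, ?_, ?_, rfl, rfl⟩, ?_⟩
  · exact (continuous_subtype_val.comp (e.continuous.comp continuous_projIcc)).continuousOn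
  · intro t ht t' ht' h
    have h1 := e.injective (Subtype.ext h)
    rw [projIcc_of_mem _ ht, projIcc_of_mem _ ht'] at h1
    exact congrArg Subtype.val h1
  · apply Subset.antisymm
    · rintro _ ⟨t, -, rfl⟩
      exact (e _).2
    · intro z hz
      refine ⟨e.symm ⟨z, hz⟩, (e.symm ⟨z, hz⟩).2, ?_⟩
      simp

theorem IsArcBetween.exists_isArcPath {A : Set T} (hA : IsArcBetween A a b) :
    ∃ γ : ℝ → T, IsArcPath γ 0 1 a b := by
  obtain ⟨e, h0, h1⟩ := hA
  refine ⟨fun t => (e (projIcc 0 1 zero_le_one t) : T), zero_le_one, ?_, ?_, ?_, ?_⟩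
  · exact (continuous_subtype_val.comp (e.continuous.comp continuous_projIcc)).continuousOn
  · intro t ht t' ht' h
    have h1 := e.injective (Subtype.ext h)
    rw [projIcc_of_mem _ ht, projIcc_of_mem _ ht'] at h1
    exact congrArg Subtype.val h1
  · simpa using h0
  · simpa using h1

end ArcPaths

section RootOrder

variable {T : Type*} [MetricSpace T] {s c x y z p : T} {γ : ℝ → T} {u v t t' : ℝ}

theorem RootLE.refl (s x : T) : RootLE s x x := fun h => h.right_mem rfl

theorem RootLE.exists_eq (h : RootLE s c z) (hγ : IsArcPath γ u v s z) :
    ∃ t ∈ Icc u v, γ t = c := by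
  by_contra! hne
  exact h ⟨γ, u, v, hγ, hne⟩

theorem RootLE.trans (h₁ : RootLE s x y) (h₂ : RootLE s y z) : RootLE s x z := by
  rintro ⟨γ, u, v, hγ, hne⟩
  obtain ⟨t, ht, rfl⟩ := h₂.exists_eq hγ
  refine h₁ ⟨γ, u, t, hγ.source ▸ hγ.sub (left_mem_Icc.2 hγ.le) ht ht.1, ?_⟩
  exact hne.mono_left (Icc_subset_Icc le_rfl ht.2)

theorem IsTreeSpace.exists_isArcPath (hT : IsTreeSpace T) (x y : T) :
    ∃ (γ : ℝ → T) (u v : ℝ), IsArcPath γ u v x y := by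
  rcases eq_or_ne x y with rfl | hxy
  · exact ⟨fun _ => x, 0, 0, le_rfl, continuousOn_const, by simp, rfl, rfl⟩
  · obtain ⟨γ, hγ⟩ := (hT.uniqueArc x y hxy).exists.choose_spec.exists_isArcPath
    exact ⟨γ, 0, 1, hγ⟩

theorem IsTreeSpace.image_eq (hT : IsTreeSpace T) {δ : ℝ → T} {u' v' : ℝ}
    (hγ : IsArcPath γ u v x y) (hδ : IsArcPath δ u' v' x y) :
    γ '' Icc u v = δ '' Icc u' v' := by
  rcases eq_or_ne x y with rfl | hxy
  · have h1 : u = v := hγ.inj (left_mem_Icc.2 hγ.le) (right_mem_Icc.2 hγ.le)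
      (hγ.source.trans hγ.target.symm)
    have h2 : u' = v' := hδ.inj (left_mem_Icc.2 hδ.le) (right_mem_Icc.2 hδ.le)
      (hδ.source.trans hδ.target.symm)
    subst h1 h2
    simp [hγ.source, hδ.source]
  · have h1 : u < v := hγ.le.lt_of_ne
      (by rintro rfl; exact hxy (hγ.source.symm.trans hγ.target))
    have h2 : u' < v' := hδ.le.lt_of_ne
      (by rintro rfl; exact hxy (hδ.source.symm.trans hδ.target))
    exact (hT.uniqueArc x y hxy).unique (hγ.isArcBetween h1) (hδ.isArcBetween h2)

theorem IsTreeSpace.not_arcJoined (hT : IsTreeSpace T) (hγ : IsArcPath γ u v x y)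
    (ht : t ∈ Icc u v) : ¬ ArcJoined ({γ t}ᶜ : Set T) x y := by
  rintro ⟨δ, u', v', hδ, hne⟩
  obtain ⟨t', ht', h⟩ : γ t ∈ δ '' Icc u' v' := hT.image_eq hγ hδ ▸ mem_image_of_mem γ ht
  exact hne ht' h

theorem IsTreeSpace.rootLE_of_le (hT : IsTreeSpace T) (hγ : IsArcPath γ u v s p)
    (ht : t ∈ Icc u v) (ht' : t' ∈ Icc u v) (htt : t ≤ t') : RootLE s (γ t) (γ t') :=
  hT.not_arcJoined (hγ.source ▸ hγ.sub (left_mem_Icc.2 hγ.le) ht' ht'.1) ⟨ht.1, htt⟩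

/-- Adding `c` to a union of arc components of `{c}ᶜ` gives a closed set. -/
theorem IsTreeSpace.isClosed_insert (hT : IsTreeSpace T) {E : Set T}
    (hE : ∀ y ∈ E, ∀ z, ArcJoined ({c}ᶜ : Set T) y z → z ∈ E) : IsClosed (insert c E) := by
  rcases hT.finiteArcs with ⟨x₀, hx₀⟩ | ⟨F, hF, hcover⟩
  · have : Subsingleton T := ⟨fun a b => by
      have ha : a ∈ ({x₀} : Set T) := hx₀ ▸ mem_univ a
      have hb : b ∈ ({x₀} : Set T) := hx₀ ▸ mem_univ b
      exact ha.trans hb.symm⟩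
    exact (Set.toFinite _).isClosed
  have hsub : closure E ⊆ insert c E := by
    intro z hz
    by_cases hzc : z = c
    · exact Or.inl hzc
    right
    have hEq : E = ⋃ A ∈ F, E ∩ A := by
      ext y
      have : y ∈ ⋃₀ (F : Set (Set T)) := hcover ▸ mem_univ y
      obtain ⟨A, hA, hyA⟩ := this
      simp only [mem_iUnion, mem_inter_iff, exists_prop]
      exact ⟨fun h => ⟨A, hA, h, hyA⟩, fun ⟨_, _, h, _⟩ => h⟩
    rw [hEq, F.closure_biUnion] at hz
    simp only [mem_iUnion] at hz
    obtain ⟨A, hA, hzA⟩ := hz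
    obtain ⟨α, a, b, hα, rfl⟩ := (hF A hA).exists_isArcPath
    have hclosed : IsClosed (α '' Icc 0 1) :=
      (isCompact_Icc.image_of_continuousOn hα.cont).isClosed
    obtain ⟨t₁, ht₁, rfl⟩ := closure_minimal inter_subset_right hclosed hzA
    obtain ⟨ε, hε, hball⟩ := Metric.mem_nhdsWithin_iff.1
      ((hα.cont t₁ ht₁).preimage_mem_nhdsWithin (isOpen_compl_singleton.mem_nhds hzc))
    have hK : IsClosed (α '' (Icc 0 1 \ ball t₁ ε)) :=
      ((isCompact_Icc.diff isOpen_ball).image_of_continuousOn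
        (hα.cont.mono sdiff_subset)).isClosed
    have hzK : α t₁ ∉ α '' (Icc 0 1 \ ball t₁ ε) := by
      rintro ⟨t, ⟨ht, htb⟩, h⟩
      rw [hα.inj ht ht₁ h] at htb
      exact htb (mem_ball_self hε)
    obtain ⟨_, hyK, hyE, t, ht, rfl⟩ := mem_closure_iff.1 hzA _ hK.isOpen_compl hzK
    have htb : t ∈ ball t₁ ε := by
      by_contra h
      exact hyK ⟨t, ⟨ht, h⟩, rfl⟩
    have hconv : ∀ t' ∈ uIcc t t₁, α t' ∈ ({c}ᶜ : Set T) := by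
      intro t' ht'
      have hoc : uIcc t t₁ ⊆ ball t₁ ε := by
        rw [Real.ball_eq_Ioo] at htb ⊢
        exact ordConnected_Ioo.uIcc_subset htb ⟨by linarith, by linarith⟩
      exact hball ⟨hoc ht', ordConnected_Icc.uIcc_subset ht ht₁ ht'⟩
    refine hE _ hyE _ ?_
    rcases le_total t t₁ with h | h
    · rw [uIcc_of_le h] at hconv
      exact ⟨α, t, t₁, hα.sub ht ht₁ h, hconv⟩
    · rw [uIcc_of_ge h] at hconv
      exact ArcJoined.symm ⟨α, t₁, t, hα.sub ht₁ ht h, hconv⟩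
  refine isClosed_of_closure_subset ?_
  rw [insert_eq, closure_union, closure_singleton]
  exact union_subset (by simp) hsub

theorem IsTreeSpace.isOpen_not_rootLE (hT : IsTreeSpace T) (s c : T) :
    IsOpen {z | ¬ RootLE s c z} := by
  have h := hT.isClosed_insert (c := c) (E := {z | z ≠ c ∧ RootLE s c z})
    (fun y hy z hyz => ⟨hyz.right_mem, fun hz => hy.2 (hz.trans hyz.symm)⟩)
  convert h.isOpen_compl using 1
  ext z
  by_cases hz : z = c
  · simp [hz, RootLE.refl]
  · simp [hz]

theorem IsTreeSpace.isOpen_rootLT (hT : IsTreeSpace T) (s c : T) :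
    IsOpen {z | z ≠ c ∧ RootLE s c z} := by
  have h := hT.isClosed_insert (c := c) (E := {z | ¬ RootLE s c z})
    (fun y hy z hyz => by
      rw [mem_ofPred_eq, RootLE, not_not] at hy ⊢
      exact hy.trans hyz)
  convert h.isOpen_compl using 1
  ext z
  simp

theorem IsTreeSpace.mem_of_rootLE (hT : IsTreeSpace T) {C : Set T} (hC : IsPreconnected C)
    (hs : s ∈ C) (hz : z ∈ C) (hcz : RootLE s c z) : c ∈ C := by
  by_contra hc
  by_cases hsc : s = c
  · exact hc (hsc ▸ hs)
  have hs' : ¬ RootLE s c s := not_not.2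
    ⟨fun _ => s, 0, 0, ⟨le_rfl, continuousOn_const, by simp, rfl, rfl⟩, fun _ _ => hsc⟩
  obtain ⟨w, -, hw1, hw2⟩ := hC _ _ (hT.isOpen_not_rootLE s c) (hT.isOpen_rootLT s c)
    (fun w hw => by
      by_cases h : RootLE s c w
      · exact Or.inr ⟨fun hwc => hc (hwc ▸ hw), h⟩
      · exact Or.inl h)
    ⟨s, hs, hs'⟩ ⟨z, hz, fun hzc => hc (hzc ▸ hz), hcz⟩
  exact hw1 hw2.2

theorem IsTreeSpace.isCut_of_rootLE (hT : IsTreeSpace T) (hcs : c ≠ s) (hcz : RootLE s c z)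
    (hne : z ≠ c) : IsCut c :=
  fun hpre => hT.mem_of_rootLE hpre (s := s) hcs.symm hne hcz rfl

theorem IsTreeSpace.exists_finset_rootLE (hT : IsTreeSpace T) (s : T) :
    ∃ P : Finset T, ∀ z, ∃ p ∈ P, RootLE s z p := by
  classical
  rcases hT.finiteArcs with ⟨x₀, hx₀⟩ | ⟨F, hF, hcover⟩
  · refine ⟨{x₀}, fun z => ⟨x₀, by simp, ?_⟩⟩
    have hz : z ∈ ({x₀} : Set T) := hx₀ ▸ mem_univ z
    rw [mem_singleton_iff.1 hz]
    exact RootLE.refl s x₀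
  have := hT.conn.toNonempty
  choose! α a b hα himg using fun A (hA : A ∈ F) => (hF A hA).exists_isArcPath
  refine ⟨F.image a ∪ F.image b, fun z => ?_⟩
  obtain ⟨A, hA, hzA⟩ : z ∈ ⋃₀ (F : Set (Set T)) := hcover ▸ mem_univ z
  by_contra! hno
  have h1 := not_not.1 (hno (a A) (Finset.mem_union_left _ (Finset.mem_image_of_mem a hA)))
  have h2 := not_not.1 (hno (b A) (Finset.mem_union_right _ (Finset.mem_image_of_mem b hA)))
  rw [← himg A hA] at hzA
  obtain ⟨t, ht, rfl⟩ := hzA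
  exact hT.not_arcJoined (hα A hA) ht (h1.symm.trans h2)

end RootOrder

section Dynamics

variable {T : Type*} [MetricSpace T] {f : T → T} {s x : T}

theorem IsAFP.iterate (hs : IsAFP f s) {n : ℕ} (hn : 1 ≤ n) : IsAFP f^[n] s := by
  refine ⟨Function.iterate_fixed hs.1 n, fun U hU hsU => ?_⟩
  obtain ⟨V, hV, hsV, hVU, hfV⟩ := hs.2 U hU hsU
  refine ⟨V, hV, hsV, hVU, ?_⟩
  obtain ⟨m, rfl⟩ : ∃ m, n = m + 1 := ⟨n - 1, by omega⟩
  rintro _ ⟨z, hz, rfl⟩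
  rw [Function.iterate_succ_apply]
  have hmaps : MapsTo f V V := fun w hw => hfV ⟨w, subset_closure hw, rfl⟩
  exact hmaps.iterate m (hfV ⟨z, hz, rfl⟩)

/-- Some point on the way from an attracting fixed point `s` to `x` is not moved away from `s`. -/
theorem IsAFP.exists_not_rootLE (hT : IsTreeSpace T) (hf : Continuous f) (hs : IsAFP f s)
    (hxs : x ≠ s) {γ : ℝ → T} {u v : ℝ} (hγ : IsArcPath γ u v s x) :
    ∃ b ∈ Icc u v, ¬ RootLE s (γ b) (f (γ b)) := by
  obtain ⟨V, hV, hsV, hVx, hfV⟩ := hs.2 {x}ᶜ isOpen_compl_singleton hxs.symm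
  have hK : IsClosed (Icc u v ∩ γ ⁻¹' Vᶜ) :=
    hγ.cont.preimage_isClosed_of_isClosed isClosed_Icc hV.isClosed_compl
  obtain ⟨b, ⟨hb, hbV⟩, hmin⟩ :=
    (isCompact_Icc.of_isClosed_subset hK inter_subset_left).exists_isLeast
      ⟨v, right_mem_Icc.2 hγ.le, by
        rw [mem_preimage, hγ.target]
        exact fun h => hVx h rfl⟩
  refine ⟨b, hb, fun hle => hbV ?_⟩
  have hlt : ∀ t ∈ Icc u v, t < b → γ t ∈ V := by
    intro t ht htb
    by_contra h
    exact (hmin ⟨ht, h⟩).not_gt htb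
  have hub : u < b := by
    refine hb.1.lt_of_ne ?_
    rintro rfl
    exact hbV (hγ.source.symm ▸ hsV)
  have hIcc : Icc u b ⊆ Icc u v := Icc_subset_Icc le_rfl hb.2
  have hcl : γ '' Icc u b ⊆ closure V := by
    rw [← closure_Ico hub.ne]
    refine (ContinuousOn.image_closure ?_).trans (closure_mono ?_)
    · rw [closure_Ico hub.ne]
      exact hγ.cont.mono hIcc
    · rintro _ ⟨t, ht, rfl⟩
      exact hlt t (hIcc (Ico_subset_Icc_self ht)) ht.2
  have hCV : f '' (γ '' Icc u b) ⊆ V := (image_mono hcl).trans hfV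
  refine hCV (hT.mem_of_rootLE (s := s) (z := f (γ b)) ?_ ?_ ?_ hle)
  · exact (isPreconnected_Icc.image γ (hγ.cont.mono hIcc)).image f hf.continuousOn
  · exact ⟨s, ⟨u, left_mem_Icc.2 hub.le, hγ.source⟩, hs.1⟩
  · exact ⟨γ b, ⟨b, right_mem_Icc.2 hub.le, rfl⟩, rfl⟩

/-- If no cut-point is fixed by `f`, then no point is moved strictly away from `s`. -/
theorem IsAFP.eq_of_rootLE (hT : IsTreeSpace T) (hf : Continuous f) (hs : IsAFP f s)
    (hcut : ∀ y, IsCut y → f y ≠ y) (hle : RootLE s x (f x)) : f x = x := by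
  rcases eq_or_ne x s with rfl | hxs
  · exact hs.1
  obtain ⟨γ, u, v, hγ⟩ := hT.exists_isArcPath s x
  obtain ⟨b, hb, hbY⟩ := hs.exists_not_rootLE hT hf hxs hγ
  have hv : v ∈ Icc u v := right_mem_Icc.2 hγ.le
  let Y : Set ℝ := {t | t ∈ Icc b v ∧ RootLE s (γ t) (f (γ t))}
  have hvY : v ∈ Y := ⟨⟨hb.2, le_rfl⟩, by rwa [hγ.target]⟩
  have hYb : BddBelow Y := ⟨b, fun t ht => ht.1.1⟩
  have hbv : Icc b v ⊆ Icc u v := Icc_subset_Icc hb.1 le_rfl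
  obtain ⟨τ, hτ⟩ : ∃ τ, IsGLB Y τ := ⟨_, isGLB_csInf ⟨v, hvY⟩ hYb⟩
  have hτm : τ ∈ Icc b v := ⟨hτ.2 fun t ht => ht.1.1, hτ.1 hvY⟩
  have hτuv : τ ∈ Icc u v := hbv hτm
  have hcont : ContinuousWithinAt (fun t => f (γ t)) (Icc b v) τ :=
    (hf.comp_continuousOn (hγ.cont.mono hbv)) τ hτm
  have hfix : f (γ τ) = γ τ := by
    by_contra hne
    by_cases hτY : RootLE s (γ τ) (f (γ τ))
    · have hbτ : b < τ := by
        refine hτm.1.lt_of_ne ?_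
        rintro rfl
        exact hbY hτY
      obtain ⟨ε, hε, hball⟩ := Metric.mem_nhdsWithin_iff.1
        (hcont.preimage_mem_nhdsWithin ((hT.isOpen_rootLT s (γ τ)).mem_nhds ⟨hne, hτY⟩))
      obtain ⟨t, ht1, ht2⟩ := exists_between (max_lt hbτ (sub_lt_self τ hε))
      have htm : t ∈ Icc b v := ⟨(le_max_left _ _).trans ht1.le, ht2.le.trans hτm.2⟩
      have htb : t ∈ ball τ ε := by
        rw [Real.ball_eq_Ioo]
        exact ⟨(le_max_right _ _).trans_lt ht1, by linarith⟩
      have h1 : RootLE s (γ τ) (f (γ t)) := (hball ⟨htb, htm⟩).2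
      have h2 : t ∈ Y := ⟨htm, (hT.rootLE_of_le hγ (hbv htm) hτuv ht2.le).trans h1⟩
      exact (hτ.1 h2).not_gt ht2
    · obtain ⟨ε, hε, hball⟩ := Metric.mem_nhdsWithin_iff.1
        (hcont.preimage_mem_nhdsWithin ((hT.isOpen_not_rootLE s (γ τ)).mem_nhds hτY))
      obtain ⟨t, htY, ht1, ht2⟩ := hτ.exists_between (lt_add_of_pos_right τ hε)
      have htb : t ∈ ball τ ε := by
        rw [Real.ball_eq_Ioo]
        exact ⟨by linarith, ht2⟩
      exact hball ⟨htb, htY.1⟩ ((hT.rootLE_of_le hγ hτuv (hbv htY.1) ht1).trans htY.2)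
  rcases eq_or_ne τ v with rfl | hτv
  · rwa [hγ.target] at hfix
  have hτb : τ ≠ b := by
    rintro rfl
    apply hbY
    rw [hfix]
    exact RootLE.refl s _
  refine absurd hfix (hcut _ (hT.isCut_of_rootLE (s := s) (z := x) ?_ ?_ ?_))
  · intro h
    have := hγ.inj hτuv (left_mem_Icc.2 hγ.le) (h.trans hγ.source.symm)
    exact hτb (le_antisymm (this.trans_le hb.1) hτm.1)
  · rw [← hγ.target]
    exact hT.rootLE_of_le hγ hτuv hv hτuv.2
  · intro h
    exact hτv (hγ.inj hτuv hv (h.symm.trans hγ.target.symm))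

/-- Along a chain, a sequence none of whose terms lies above an earlier one converges to `s` or to
a cut-point. -/
theorem IsTreeSpace.exists_tendsto_of_forall_rootLE (hT : IsTreeSpace T) {p : T} {w : ℕ → T}
    {I : Set ℕ} (hI : ∀ n ∈ I, RootLE s (w n) p)
    (hw : ∀ m ∈ I, ∀ n ∈ I, m < n → ¬ RootLE s (w m) (w n)) :
    ∃ q, (q = s ∨ IsCut q) ∧ Tendsto w (atTop ⊓ 𝓟 I) (𝓝 q) := by
  by_cases hfin : I.Finite
  · refine ⟨s, Or.inl rfl, ?_⟩
    obtain ⟨N, hN⟩ := hfin.bddAbove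
    have : (atTop ⊓ 𝓟 I : Filter ℕ) = ⊥ := by
      rw [← Filter.empty_mem_iff_bot, mem_inf_principal]
      filter_upwards [eventually_gt_atTop N] with n hn hnI
      exact (hN hnI).not_gt hn
    rw [this]
    exact tendsto_bot
  obtain ⟨γ, u, v, hγ⟩ := hT.exists_isArcPath s p
  choose! t ht hγt using fun n hn => (hI n hn).exists_eq hγ
  have hanti : ∀ m ∈ I, ∀ n ∈ I, m < n → t n < t m := by
    intro m hm n hn hmn
    by_contra! h
    refine hw m hm n hn hmn ?_
    rw [← hγt m hm, ← hγt n hn]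
    exact hT.rootLE_of_le hγ (ht m hm) (ht n hn) h
  obtain ⟨n₀, hn₀⟩ := Set.Infinite.nonempty hfin
  obtain ⟨n₁, hn₁, hlt⟩ := Set.Infinite.exists_gt hfin n₀
  have hbdd : BddBelow (t '' I) := ⟨u, by rintro _ ⟨n, hn, rfl⟩; exact (ht n hn).1⟩
  obtain ⟨τ, hτ⟩ : ∃ τ, IsGLB (t '' I) τ := ⟨_, isGLB_csInf ⟨_, n₀, hn₀, rfl⟩ hbdd⟩
  have hτle : ∀ n ∈ I, τ ≤ t n := fun n hn => hτ.1 ⟨n, hn, rfl⟩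
  have hττ : τ < t n₀ := (hτle n₁ hn₁).trans_lt (hanti n₀ hn₀ n₁ hn₁ hlt)
  have hτuv : τ ∈ Icc u v :=
    ⟨hτ.2 (by rintro _ ⟨n, hn, rfl⟩; exact (ht n hn).1), hττ.le.trans (ht n₀ hn₀).2⟩
  have hmem : ∀ᶠ n in atTop ⊓ 𝓟 I, n ∈ I := eventually_inf_principal.2 (.of_forall fun _ h => h)
  have htend : Tendsto t (atTop ⊓ 𝓟 I) (𝓝 τ) := by
    refine tendsto_order.2 ⟨fun a ha => ?_, fun a ha => ?_⟩
    · filter_upwards [hmem] with n hn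
      exact ha.trans_le (hτle n hn)
    · obtain ⟨_, ⟨m, hm, rfl⟩, -, hma⟩ := hτ.exists_between ha
      refine eventually_inf_principal.2 ?_
      filter_upwards [eventually_gt_atTop m] with n hn hnI
      exact (hanti m hm n hnI hn).trans hma
  refine ⟨γ τ, ?_, ?_⟩
  · by_cases hs : γ τ = s
    · exact Or.inl hs
    · refine Or.inr (hT.isCut_of_rootLE hs (hT.rootLE_of_le hγ hτuv (ht n₀ hn₀) hττ.le) ?_)
      intro h
      exact hττ.ne' (hγ.inj (ht n₀ hn₀) hτuv h)
  · have h1 : Tendsto t (atTop ⊓ 𝓟 I) (𝓝[Icc u v] τ) :=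
      tendsto_nhdsWithin_iff.2 ⟨htend, hmem.mono fun n hn => ht n hn⟩
    refine ((hγ.cont τ hτuv).tendsto.comp h1).congr' ?_
    filter_upwards [hmem] with n hn
    exact hγt n hn

theorem IsAFP.tendsto_iterate_of_mapClusterPt (hs : IsAFP f s)
    (hx : MapClusterPt s atTop (fun n => f^[n] x)) :
    Tendsto (fun n => f^[n] x) atTop (𝓝 s) := by
  refine (nhds_basis_opens s).tendsto_right_iff.2 fun U hU => ?_
  obtain ⟨V, hV, hsV, hVU, hfV⟩ := hs.2 U hU.2 hU.1
  have hmaps : MapsTo f V V := fun w hw => hfV ⟨w, subset_closure hw, rfl⟩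
  obtain ⟨n, hn⟩ := (hx.frequently (hV.mem_nhds hsV)).exists
  filter_upwards [eventually_ge_atTop n] with m hm
  obtain ⟨k, rfl⟩ := Nat.exists_eq_add_of_le' hm
  rw [Function.iterate_add_apply]
  exact hVU (hmaps.iterate k hn)

theorem mapClusterPt_iterate_image (hf : Continuous f) {q : T}
    (hq : MapClusterPt q atTop (fun n => f^[n] x)) (m : ℕ) :
    MapClusterPt (f^[m] q) atTop (fun n => f^[n] x) := by
  have h := hq.continuousAt_comp (hf.iterate m).continuousAt
  have heq : (f^[m] ∘ fun n => f^[n] x) = (fun n => f^[n] x) ∘ fun n => m + n := by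
    funext n
    simp [Function.iterate_add_apply]
  rw [heq] at h
  exact h.of_comp (tendsto_add_atTop_iff_nat m |>.2 tendsto_id |>.congr fun n => by simp [add_comm])

end Dynamics

/-- with no periodic cut-points, every orbit either eventually
hits a periodic point or converges to the attracting fixed point `s`. -/
theorem orbit_periodic_or_tendsto_afp {T : Type*} [MetricSpace T]
    (hT : IsTreeSpace T) (f : T → T) (hf : Continuous f)
    (hcut : ∀ x : T, IsCut x → ∀ p : ℕ, 1 ≤ p → f^[p] x ≠ x)
    (s : T) (hs : IsAFP f s) :
    ∀ x : T, (∃ n p : ℕ, 1 ≤ p ∧ f^[p] (f^[n] x) = f^[n] x) ∨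
      Tendsto (fun n : ℕ => f^[n] x) atTop (𝓝 s) := by
  intro x
  refine or_iff_not_imp_left.2 fun hper => hs.tendsto_iterate_of_mapClusterPt ?_
  push Not at hper
  have hmove : ∀ m n, m < n → ¬ RootLE s (f^[m] x) (f^[n] x) := by
    intro m n hmn hle
    obtain ⟨k, rfl⟩ := Nat.exists_eq_add_of_le' hmn.le
    have hk : 1 ≤ k := by omega
    rw [Function.iterate_add_apply] at hle
    exact hper m k hk ((hs.iterate hk).eq_of_rootLE hT (hf.iterate k)
      (fun y hy => hcut y hy k hk) hle)
  obtain ⟨P, hP⟩ := hT.exists_finset_rootLE s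
  choose q hq hlim using fun p : T =>
    hT.exists_tendsto_of_forall_rootLE (s := s) (p := p) (w := fun n => f^[n] x)
      (I := {n | RootLE s (f^[n] x) p}) (fun _ h => h) (fun m _ n _ hmn => hmove m n hmn)
  have hcluster : ∀ y, MapClusterPt y atTop (fun n => f^[n] x) → ∃ p ∈ P, y = q p := by
    intro y hy
    have hsup : (atTop : Filter ℕ) ≤ ⨆ p ∈ P, atTop ⊓ 𝓟 {n | RootLE s (f^[n] x) p} := by
      intro A hA
      simp only [mem_iSup, mem_inf_principal] at hA
      filter_upwards [(Filter.eventually_all_finset P).2 hA] with n hn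
      obtain ⟨p, hp, hle⟩ := hP (f^[n] x)
      exact hn p hp hle
    by_contra! hne
    have hsep : ∀ p ∈ P, ∃ U ∈ 𝓝 y, ∃ W ∈ 𝓝 (q p), Disjoint U W := fun p hp =>
      Filter.disjoint_iff.1 (disjoint_nhds_nhds.2 (hne p hp))
    choose! U hU W hW hUW using hsep
    have hmem : (⋂ p ∈ P, U p) ∈ 𝓝 y := (Filter.biInter_finset_mem P).2 hU
    refine (hy.frequently hmem) (hsup ?_)
    simp only [mem_iSup]
    intro p hp
    filter_upwards [hlim p (hW p hp)] with n hn hnU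
    exact disjoint_left.1 (hUW p hp) (mem_iInter₂.1 hnU p hp) hn
  have := hT.compact
  obtain ⟨y, hy⟩ := exists_clusterPt_of_compactSpace (map (fun n => f^[n] x) atTop)
  have hmaps : ∀ m : ℕ, f^[m] y ∈ (q '' P : Set T) := by
    intro m
    obtain ⟨p, hp, h⟩ := hcluster _ (mapClusterPt_iterate_image hf hy m)
    exact ⟨p, hp, h.symm⟩
  obtain ⟨m, n, hmn, heq⟩ : ∃ m n, m < n ∧ f^[m] y = f^[n] y := by
    obtain ⟨m, -, n, -, hmn, heq⟩ := Set.infinite_univ.exists_lt_map_eq_of_mapsTo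
      (fun m _ => hmaps m) (P.finite_toSet.image q)
    exact ⟨m, n, hmn, heq⟩
  have hclm := mapClusterPt_iterate_image hf hy m
  obtain ⟨p, -, hp⟩ := hcluster _ hclm
  rcases hq p with h | h
  · rwa [hp, h] at hclm
  · rw [← hp] at h
    refine absurd ?_ (hcut _ h (n - m) (by omega))
    rw [← Function.iterate_add_apply, Nat.sub_add_cancel hmn.le, heq]
end
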